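/- arXiv:2604.11366 — 4 statements merged into one kernel-verified Lean document; each statement's English description precedes it below -/
import Mathlib

section
/- For every odd integer t ≥ 1 and every ε > 0 there exists N such that for all n ≥ N there exists a graph G on n vertices containing no subgraph isomorphic to B_t with e(G) ≥ (√⌊(t+1)/2⌋/2 − ε)·n^{3/2}. (That is, ex(n, B_t) ≥ (√⌊(t+1)/2⌋/2)(1+o(1))·n^{3/2} for odd t.) -/
open SimpleGraph

/-- `F` is contained in `G` as a subgraph: there is an injective map preserving adjacency. -/
def ContainsCopy {α β : Type*} (F : SimpleGraph α) (G : SimpleGraph β) : Prop :=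
  ∃ f : α → β, Function.Injective f ∧ ∀ ⦃a b : α⦄, F.Adj a b → G.Adj (f a) (f b)

/-- `Bgraph t = K₂ □ S_t`, the Cartesian product of an edge and a star with `t` edges. -/
def Bgraph (t : ℕ) : SimpleGraph (Fin 2 × (Fin 1 ⊕ Fin t)) :=
  (⊤ : SimpleGraph (Fin 2)).boxProd (completeBipartiteGraph (Fin 1) (Fin t))


/-- Blow-up of the Brown / Erdős–Rényi type graph over a field. -/
def blowG (F : Type) [Field F] (k : ℕ) : SimpleGraph ((F × F) × Fin k) where
  Adj x y := x.1 ≠ y.1 ∧ x.1.1 * y.1.1 = x.1.2 + y.1.2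
  symm := ⟨fun x y h => ⟨h.1.symm, by rw [mul_comm, h.2, add_comm]⟩⟩
  loopless := ⟨fun x h => h.1 rfl⟩

lemma common_nbr {F : Type} [Field F] {p q r s : F × F}
    (h1 : p.1 * r.1 = p.2 + r.2) (h2 : q.1 * r.1 = q.2 + r.2)
    (h3 : p.1 * s.1 = p.2 + s.2) (h4 : q.1 * s.1 = q.2 + s.2) : p = q ∨ r = s := by
  have h : (p.1 - q.1) * (r.1 - s.1) = 0 := by linear_combination h1 - h2 - h3 + h4
  rcases mul_eq_zero.mp h with h | h
  · left
    have e : p.1 = q.1 := sub_eq_zero.mp h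
    refine Prod.ext e ?_
    rw [e] at h1
    linear_combination h2 - h1
  · right
    have e : r.1 = s.1 := sub_eq_zero.mp h
    refine Prod.ext e ?_
    rw [e] at h1
    linear_combination h3 - h1

lemma blowG_free (F : Type) [Field F] (k : ℕ) (hk : 1 ≤ k) :
    ¬ ContainsCopy (Bgraph (2 * k - 1)) (blowG F k) := by
  classical
  rintro ⟨f, hinj, hadj⟩
  set u := f (0, Sum.inl 0) with hu
  set v := f (1, Sum.inl 0) with hv
  set U : Fin (2 * k - 1) → _ := fun i => f (0, Sum.inr i) with hU
  set V : Fin (2 * k - 1) → _ := fun i => f (1, Sum.inr i) with hV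
  have huv : (blowG F k).Adj u v := hadj (by simp [Bgraph])
  have huU : ∀ i, (blowG F k).Adj u (U i) := fun i => hadj (by simp [Bgraph])
  have hvV : ∀ i, (blowG F k).Adj v (V i) := fun i => hadj (by simp [Bgraph])
  have hUV : ∀ i, (blowG F k).Adj (U i) (V i) := fun i => hadj (by simp [Bgraph])
  have key : ∀ i, (V i).1 = u.1 ∨ (U i).1 = v.1 := by
    intro i
    rcases common_nbr (p := u.1) (q := (V i).1) (r := v.1) (s := (U i).1) huv.2
      (hvV i).symm.2 (huU i).2 (hUV i).symm.2 with h | h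
    · exact Or.inl h.symm
    · exact Or.inr h.symm
  have h1 : (Finset.univ.filter fun i => (V i).1 = u.1).card ≤ k - 1 := by
    have := Finset.card_le_card_of_injOn (s := Finset.univ.filter fun i => (V i).1 = u.1)
      (t := Finset.univ.erase u.2) (fun i => (V i).2) ?_ ?_
    · simpa using this
    · intro i hi
      simp only [Finset.coe_filter, Finset.mem_univ, true_and, Set.mem_ofPred_eq] at hi
      simp only [Finset.coe_erase, Finset.coe_univ, Set.mem_sdiff, Set.mem_univ, true_and,
        Set.mem_singleton_iff]
      intro h
      have := hinj (Prod.ext hi h : V i = u)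
      simp at this
    · intro i hi j hj h
      simp only [Finset.coe_filter, Finset.mem_univ, true_and, Set.mem_ofPred_eq] at hi hj
      have := hinj (Prod.ext (hi.trans hj.symm) h : V i = V j)
      simpa using this
  have h2 : (Finset.univ.filter fun i => ¬ (V i).1 = u.1).card ≤ k - 1 := by
    have := Finset.card_le_card_of_injOn (s := Finset.univ.filter fun i => ¬ (V i).1 = u.1)
      (t := Finset.univ.erase v.2) (fun i => (U i).2) ?_ ?_
    · simpa using this
    · intro i hi
      simp only [Finset.coe_filter, Finset.mem_univ, true_and, Set.mem_ofPred_eq] at hi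
      simp only [Finset.coe_erase, Finset.coe_univ, Set.mem_sdiff, Set.mem_univ, true_and,
        Set.mem_singleton_iff]
      intro h
      have := hinj (Prod.ext ((key i).resolve_left hi) h : U i = v)
      simp at this
    · intro i hi j hj h
      simp only [Finset.coe_filter, Finset.mem_univ, true_and, Set.mem_ofPred_eq] at hi hj
      have := hinj (Prod.ext (((key i).resolve_left hi).trans ((key j).resolve_left hj).symm) h
        : U i = U j)
      simpa using this
  have h3 := Finset.card_filter_add_card_filter_not (s := (Finset.univ : Finset (Fin (2 * k - 1))))
    (fun i => (V i).1 = u.1)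
  simp only [Finset.card_univ, Fintype.card_fin] at h3
  omega

lemma map_free {α β : Type} (G : SimpleGraph α) (e : α ↪ β) (t : ℕ) (ht : 1 ≤ t)
    (h : ¬ ContainsCopy (Bgraph t) G) : ¬ ContainsCopy (Bgraph t) (G.map e) := by
  rintro ⟨f, hinj, hadj⟩
  apply h
  have hn : ∀ x, ∃ y, (Bgraph t).Adj x y := by
    rintro ⟨a, b | b⟩
    · exact ⟨(a, Sum.inr ⟨0, ht⟩), by simp [Bgraph]⟩
    · exact ⟨(a, Sum.inl 0), by simp [Bgraph]⟩
  have hr : ∀ x, ∃ a, e a = f x := by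
    intro x
    obtain ⟨y, hy⟩ := hn x
    have := hadj hy
    rw [SimpleGraph.map_adj] at this
    obtain ⟨a, b, _, h2, _⟩ := this
    exact ⟨a, h2⟩
  choose g hg using hr
  refine ⟨g, ?_, ?_⟩
  · intro x y hxy
    apply hinj
    rw [← hg, ← hg, hxy]
  · intro x y hxy
    have := hadj hxy
    rw [← hg, ← hg, SimpleGraph.map_adj_apply] at this
    exact this

lemma blowG_edges (F : Type) [Field F] [Fintype F] (k : ℕ) :
    (k * k * Fintype.card F ^ 2 * (Fintype.card F - 1) : ℕ) ≤ 2 * (blowG F k).edgeSet.ncard := by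
  classical
  have hd : ∀ x, k * (Fintype.card F - 1) ≤ (blowG F k).degree x := by
    intro x
    rw [← SimpleGraph.card_neighborFinset_eq_degree]
    have := Finset.card_le_card_of_injOn
      (s := (Finset.univ.erase x.1.1) ×ˢ (Finset.univ : Finset (Fin k)))
      (t := (blowG F k).neighborFinset x) (fun c => ((c.1, x.1.1 * c.1 - x.1.2), c.2)) ?_ ?_
    · rw [Finset.card_product] at this
      simpa [mul_comm] using this
    · rintro ⟨c, i⟩ hc
      simp at hc
      simp only [SimpleGraph.coe_neighborFinset, SimpleGraph.mem_neighborSet]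
      refine ⟨fun h => hc ?_, by simp⟩
      rw [h]
    · rintro ⟨c, i⟩ _ ⟨d, j⟩ _ h
      simp at h
      simp [h]
  have hs := SimpleGraph.sum_degrees_eq_twice_card_edges (blowG F k)
  have hb : ∑ _x : (F × F) × Fin k, k * (Fintype.card F - 1) ≤ ∑ x, (blowG F k).degree x :=
    Finset.sum_le_sum fun x _ => hd x
  rw [hs] at hb
  rw [← SimpleGraph.coe_edgeFinset, Set.ncard_coe_finset]
  refine le_trans (le_of_eq ?_) hb
  simp
  ring

lemma graph_main (k n q : ℕ) (hk : 1 ≤ k) (hq : IsPrimePow q) (h : k * q ^ 2 ≤ n) :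
    ∃ G : SimpleGraph (Fin n), ¬ ContainsCopy (Bgraph (2 * k - 1)) G ∧
      k * k * q ^ 2 * (q - 1) ≤ 2 * G.edgeSet.ncard := by
  classical
  obtain ⟨p, m, hp, hm, rfl⟩ := hq
  have : Fact p.Prime := ⟨hp.nat_prime⟩
  let F := GaloisField p m
  have : Fintype F := Fintype.ofFinite F
  have hc : Fintype.card F = p ^ m := by
    rw [← Nat.card_eq_fintype_card]; exact GaloisField.card p m hm.ne'
  have hcard : Fintype.card ((F × F) × Fin k) ≤ Fintype.card (Fin n) := by
    simp [hc]; nlinarith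
  obtain ⟨e⟩ := Function.Embedding.nonempty_of_card_le hcard
  refine ⟨(blowG F k).map e, map_free _ e _ (by omega) (blowG_free F k hk), ?_⟩
  have := blowG_edges F k
  rw [hc] at this
  refine this.trans (le_of_eq ?_)
  have he : ((blowG F k).map e).edgeSet = e.sym2Map '' (blowG F k).edgeSet :=
    SimpleGraph.edgeSet_map e _
  rw [he, Set.ncard_image_of_injective _ e.sym2Map.injective]

open MeasureTheory Filter Topology Real FourierTransform

/-- One half of the kernel. -/
noncomputable def phiK (x : ℝ) : ℝ := (π - x) / 4 * Real.cos x + 3 / 4 * Real.sin x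

/-- The compactly supported even kernel. -/
noncomputable def fK (t : ℝ) : ℝ := phiK (min |t| π)

/-- The cosine transform of the kernel. -/
noncomputable def kK (u : ℝ) : ℝ := 2 * ∫ t in (0 : ℝ)..π, phiK t * Real.cos (u * t)

lemma phiK_cont : Continuous phiK := by unfold phiK; fun_prop

lemma fK_cont : Continuous fK := by
  unfold fK
  exact phiK_cont.comp (by fun_prop)

lemma fK_zero_of (t : ℝ) (h : t ∉ Set.Icc (-π) π) : fK t = 0 := by
  have h' : π ≤ |t| := by
    by_contra hc
    push Not at hc
    rw [abs_lt] at hc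
    exact h ⟨hc.1.le, hc.2.le⟩
  simp [fK, min_eq_right h', phiK]

lemma fK_supp : HasCompactSupport fK :=
  HasCompactSupport.intro isCompact_Icc fK_zero_of

lemma fK_zero : fK 0 = π / 4 := by
  simp [fK, phiK, Real.pi_pos.le]

lemma kK_formula (u : ℝ) : kK u * (1 - u ^ 2) ^ 2 = (1 + Real.cos (π * u)) * (2 - u ^ 2) := by
  have hd : ∀ t ∈ Set.uIcc (0 : ℝ) π, HasDerivAt (fun t : ℝ =>
      -(2 - u ^ 2) * (Real.cos t * Real.cos (u * t) + u * (Real.sin t * Real.sin (u * t)))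
      - (1 - u ^ 2) * (-(π - t) / 2 * Real.sin t * Real.cos (u * t)
        + u * ((π - t) / 2 * Real.cos t + Real.sin t / 2) * Real.sin (u * t)))
      (2 * (1 - u ^ 2) ^ 2 * (phiK t * Real.cos (u * t))) t := by
    intro t _
    have h1 : HasDerivAt (fun t => Real.cos t) (-Real.sin t) t := Real.hasDerivAt_cos t
    have h2 : HasDerivAt (fun t => Real.sin t) (Real.cos t) t := Real.hasDerivAt_sin t
    have h0 : HasDerivAt (fun t : ℝ => u * t) u t := by
      simpa using (hasDerivAt_id t).const_mul u
    have h3 : HasDerivAt (fun t => Real.cos (u * t)) (-Real.sin (u * t) * u) t := h0.cos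
    have h4 : HasDerivAt (fun t => Real.sin (u * t)) (Real.cos (u * t) * u) t := h0.sin
    have h5 : HasDerivAt (fun t : ℝ => (π - t) / 2) (-1 / 2) t := by
      simpa using ((hasDerivAt_id t).const_sub π).div_const 2
    have h6 : HasDerivAt (fun t : ℝ => -(π - t) / 2) (1 / 2) t := by
      simpa using (((hasDerivAt_id t).const_sub π).neg).div_const 2
    have := (((h1.mul h3).add ((h2.mul h4).const_mul u)).const_mul (-(2 - u ^ 2))).sub
      ((((h6.mul h2).mul h3).add
        ((((h5.mul h1).add (h2.div_const 2)).const_mul u).mul h4)).const_mul (1 - u ^ 2))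
    refine this.congr_deriv ?_
    simp only [phiK, Pi.mul_apply, Pi.add_apply]
    ring
  have hc : Continuous fun t => 2 * (1 - u ^ 2) ^ 2 * (phiK t * Real.cos (u * t)) := by
    have := phiK_cont
    fun_prop
  have := intervalIntegral.integral_eq_sub_of_hasDerivAt hd (hc.intervalIntegrable _ _)
  rw [intervalIntegral.integral_const_mul] at this
  unfold kK
  rw [show u * π = π * u from mul_comm _ _] at this
  simp at this
  linear_combination this

lemma kK_nonpos (u : ℝ) (hu : 2 ≤ u ^ 2) : kK u ≤ 0 := by
  have h := kK_formula u
  have h1 : 0 < (1 - u ^ 2) ^ 2 := by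
    have : 1 - u ^ 2 ≠ 0 := by linarith
    positivity
  have h2 : (1 + Real.cos (π * u)) * (2 - u ^ 2) ≤ 0 :=
    mul_nonpos_of_nonneg_of_nonpos (by linarith [Real.neg_one_le_cos (π * u)]) (by linarith)
  by_contra hc
  push Not at hc
  have := mul_pos hc h1
  linarith

lemma fK_fourier (u : ℝ) :
    ∫ t : ℝ, (fK t : ℂ) * Complex.exp (-((u * t : ℝ) : ℂ) * Complex.I) = (kK u : ℂ) := by
  set g : ℝ → ℂ := fun t => (fK t : ℂ) * Complex.exp (-((u * t : ℝ) : ℂ) * Complex.I) with hg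
  have hgc : Continuous g := by
    have := fK_cont
    fun_prop
  have h1 : ∫ t, g t = ∫ t in (-π)..π, g t := by
    rw [intervalIntegral.integral_of_le (by linarith [Real.pi_pos]),
      ← integral_Icc_eq_integral_Ioc, setIntegral_eq_integral_of_forall_compl_eq_zero]
    intro x hx
    simp [hg, fK_zero_of x hx]
  rw [h1, ← intervalIntegral.integral_add_adjacent_intervals (b := 0)
    (hgc.intervalIntegrable _ _) (hgc.intervalIntegrable _ _)]
  have h2 : ∫ t in (-π)..0, g t = ∫ t in (0 : ℝ)..π, g (-t) := by
    rw [intervalIntegral.integral_comp_neg]; simp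
  have hgc' : Continuous fun t => g (-t) := hgc.comp continuous_neg
  rw [h2, ← intervalIntegral.integral_add
    (hgc'.intervalIntegrable _ _) (hgc.intervalIntegrable _ _)]
  unfold kK
  rw [← intervalIntegral.integral_const_mul, ← intervalIntegral.integral_ofReal]
  apply intervalIntegral.integral_congr
  intro t ht
  rw [Set.uIcc_of_le Real.pi_pos.le] at ht
  have e1 : fK t = phiK t := by
    simp [fK, abs_of_nonneg ht.1, ht.2]
  have e2 : fK (-t) = phiK t := by
    simp [fK, abs_of_nonneg ht.1, ht.2]
  simp only [hg, e1, e2]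
  push_cast
  rw [Complex.cos]
  ring_nf

lemma fK_int : Integrable (fun t => (fK t : ℂ)) :=
  (fK_cont.integrable_of_hasCompactSupport fK_supp).ofReal

lemma kK_eq_fourier (u : ℝ) : (kK (2 * π * u) : ℂ) = 𝓕 (fun t => (fK t : ℂ)) u := by
  rw [← fK_fourier, Real.fourier_eq']
  congr 1
  ext t
  rw [smul_eq_mul, mul_comm]
  congr 2
  simp
  ring

lemma kK_cont : Continuous kK := by
  unfold kK
  have := phiK_cont
  refine continuous_const.mul ?_
  apply intervalIntegral.continuous_parametric_intervalIntegral_of_continuous'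
  fun_prop

lemma kK_int : Integrable kK := by
  obtain ⟨M, hM⟩ := (isCompact_Icc (a := (-2 : ℝ)) (b := 2)).exists_bound_of_continuousOn
    kK_cont.continuousOn
  have hM0 : 0 ≤ M := (norm_nonneg _).trans (hM 0 (by simp))
  refine (integrable_inv_one_add_sq.const_mul (5 * M + 4)).mono' kK_cont.aestronglyMeasurable ?_
  refine Eventually.of_forall fun u => ?_
  rw [← div_eq_mul_inv, le_div_iff₀ (by positivity)]
  by_cases hu : u ∈ Set.Icc (-2 : ℝ) 2
  · have h1 := hM u hu
    have h2 : 1 + u ^ 2 ≤ 5 := by nlinarith [hu.1, hu.2]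
    calc ‖kK u‖ * (1 + u ^ 2) ≤ M * 5 := by gcongr
      _ ≤ _ := by linarith
  · have hu2 : 4 ≤ u ^ 2 := by
      by_contra hc
      push Not at hc
      exact hu ⟨by nlinarith, by nlinarith⟩
    have h := kK_formula u
    have h0 := kK_nonpos u (by linarith)
    rw [Real.norm_of_nonpos h0]
    have hc1 := Real.neg_one_le_cos (π * u)
    have hc2 := Real.cos_le_one (π * u)
    have h3 : -kK u * (1 - u ^ 2) ^ 2 ≤ 2 * (u ^ 2 - 1) := by nlinarith
    have h4 : -kK u * (u ^ 2 - 1) ≤ 2 := by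
      by_contra hc
      push Not at hc
      nlinarith
    nlinarith

lemma kK_integral : 0 < ∫ u, kK u := by
  have hF : Integrable (𝓕 (fun t => (fK t : ℂ))) := by
    have : 𝓕 (fun t => (fK t : ℂ)) = fun u => (kK (2 * π * u) : ℂ) := by
      ext u; rw [kK_eq_fourier]
    rw [this]
    exact (kK_int.comp_mul_left' (by positivity)).ofReal
  have hinv := Continuous.fourierInv_fourier_eq (f := fun t => (fK t : ℂ))
    (Complex.continuous_ofReal.comp fK_cont) fK_int hF
  have h0 := congrFun hinv 0
  rw [Real.fourierInv_eq'] at h0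
  simp only [inner_zero_right, mul_zero, Complex.ofReal_zero, zero_mul, Complex.exp_zero,
    one_smul, fK_zero, ← kK_eq_fourier] at h0
  rw [integral_complex_ofReal, Complex.ofReal_inj, Measure.integral_comp_mul_left] at h0
  have hp : 0 < |(2 * π)⁻¹| := by positivity
  by_contra hc
  push Not at hc
  have : |(2 * π)⁻¹| • ∫ u, kK u ≤ 0 := mul_nonpos_of_nonneg_of_nonpos hp.le hc
  linarith [Real.pi_pos]

lemma zeta_facts : ∃ G : ℂ → ℂ, ContinuousOn G {s | 1 ≤ s.re} ∧ ∀ s : ℂ, 1 < s.re →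
    LSeries (fun n => ((ArithmeticFunction.vonMangoldt n : ℝ) : ℂ)) s = G s + 1 / (s - 1) := by
  refine ⟨ArithmeticFunction.vonMangoldt.LFunctionResidueClassAux (1 : ZMod 1),
    ArithmeticFunction.vonMangoldt.continuousOn_LFunctionResidueClassAux _, ?_⟩
  intro s hs
  rw [ArithmeticFunction.vonMangoldt.eqOn_LFunctionResidueClassAux isUnit_one hs]
  have : ArithmeticFunction.vonMangoldt.residueClass (1 : ZMod 1)
      = fun n => ArithmeticFunction.vonMangoldt n := by
    ext n
    simp [ArithmeticFunction.vonMangoldt.residueClass, Set.indicator, Subsingleton.elim _ (1 : ZMod 1)]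
  simp [this]

/-- The oscillating test function. -/
noncomputable def oK (T y t : ℝ) : ℂ := (fK t : ℂ) * Complex.exp (((T * t * y : ℝ) : ℂ) * Complex.I)

lemma oK_cont (T y : ℝ) : Continuous (oK T y) := by
  unfold oK
  have := fK_cont
  fun_prop

lemma oK_norm (T y t : ℝ) : ‖oK T y t‖ = |fK t| := by
  rw [oK, norm_mul, Complex.norm_exp_ofReal_mul_I, mul_one, Complex.norm_real, Real.norm_eq_abs]

lemma oK_zero_of (T y t : ℝ) (h : t ∉ Set.Icc (-π) π) : oK T y t = 0 := by
  simp [oK, fK_zero_of t h]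

lemma oK_fourier (T y v : ℝ) :
    ∫ t : ℝ, oK T y t * Complex.exp (-((T * t * v : ℝ) : ℂ) * Complex.I)
      = (kK (T * (v - y)) : ℂ) := by
  rw [← fK_fourier]
  congr 1
  ext t
  rw [oK, mul_assoc, ← Complex.exp_add]
  congr 2
  push_cast
  ring

lemma sum_side (T y σ : ℝ) (hσ : 1 < σ)
    (hno : ∀ n : ℕ, IsPrimePow n → 2 ≤ (T * (Real.log n - y)) ^ 2) :
    (∫ t : ℝ, oK T y t * LSeries (fun n => ((ArithmeticFunction.vonMangoldt n : ℝ) : ℂ))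
      ((σ : ℂ) + ((T * t : ℝ) : ℂ) * Complex.I)).re ≤ 0 := by
  set A : ℕ → ℂ := fun n => ((ArithmeticFunction.vonMangoldt n : ℝ) : ℂ) with hA
  set F : ℕ → ℝ → ℂ := fun n t =>
    oK T y t * LSeries.term A ((σ : ℂ) + ((T * t : ℝ) : ℂ) * Complex.I) n with hF
  set c : ℕ → ℝ := fun n => ArithmeticFunction.vonMangoldt n * (n : ℝ) ^ (-σ) with hc
  have hterm : ∀ n t, LSeries.term A ((σ : ℂ) + ((T * t : ℝ) : ℂ) * Complex.I) n
      = (c n : ℂ) * Complex.exp (-((T * t * Real.log n : ℝ) : ℂ) * Complex.I) := by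
    intro n t
    rcases Nat.eq_zero_or_pos n with rfl | hn
    · simp [hc]
    · have hn0 : (n : ℂ) ≠ 0 := by exact_mod_cast hn.ne'
      rw [LSeries.term_of_ne_zero hn.ne', div_eq_mul_inv, ← Complex.cpow_neg, neg_add,
        Complex.cpow_add _ _ hn0]
      simp only [hA, hc]
      push_cast
      rw [Complex.ofReal_cpow (by positivity), ← mul_assoc]
      congr 1
      · push_cast; rfl
      · rw [Complex.cpow_def_of_ne_zero hn0]
        congr 1
        rw [← Complex.natCast_log]
        ring
  have hFn : ∀ n t, F n t = (c n : ℂ) *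
      (oK T y t * Complex.exp (-((T * t * Real.log n : ℝ) : ℂ) * Complex.I)) := by
    intro n t
    simp only [hF, hterm]
    ring
  have hcn : ∀ n, 0 ≤ c n := fun n =>
    mul_nonneg ArithmeticFunction.vonMangoldt_nonneg (by positivity)
  have hnorm : ∀ n t, ‖F n t‖ = c n * |fK t| := by
    intro n t
    rw [hFn, norm_mul, norm_mul, oK_norm, ← Complex.ofReal_neg, Complex.norm_exp_ofReal_mul_I,
      mul_one, Complex.norm_real, Real.norm_of_nonneg (hcn n)]
  have hint : ∀ n, Integrable (F n) := by
    intro n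
    have hcont : Continuous (F n) := by
      have := oK_cont T y
      rw [show F n = _ from funext (hFn n)]
      fun_prop
    exact hcont.integrable_of_hasCompactSupport
      (HasCompactSupport.intro (isCompact_Icc (a := -π) (b := π))
        fun t ht => by simp [hF, oK_zero_of T y t ht])
  have hsum : Summable c := by
    have := (ArithmeticFunction.LSeriesSummable_vonMangoldt (s := (σ : ℂ)) (by simpa using hσ)).norm
    refine this.congr fun n => ?_
    have h := hterm n 0
    simp only [mul_zero, Complex.ofReal_zero, zero_mul, add_zero, neg_zero, Complex.exp_zero,
      mul_one] at h
    rw [h, Complex.norm_real, Real.norm_of_nonneg (hcn n)]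
  have hS : Summable fun n => ∫ t, ‖F n t‖ := by
    simp_rw [hnorm, integral_const_mul]
    exact hsum.mul_right _
  have hmain := integral_tsum_of_summable_integral_norm hint hS
  have hL : (fun t : ℝ => oK T y t * LSeries A ((σ : ℂ) + ((T * t : ℝ) : ℂ) * Complex.I))
      = fun t => ∑' n, F n t := by
    ext t
    rw [LSeries, tsum_mul_left]
  have hI : ∀ n, ∫ t, F n t = ((c n * kK (T * (Real.log n - y)) : ℝ) : ℂ) := by
    intro n
    rw [show F n = _ from funext (hFn n), integral_const_mul, oK_fourier]
    push_cast
    rfl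
  rw [hL, ← hmain]
  simp_rw [hI]
  rw [← Complex.ofReal_tsum, Complex.ofReal_re]
  apply tsum_nonpos
  intro n
  by_cases hp : IsPrimePow n
  · exact mul_nonpos_of_nonneg_of_nonpos (hcn n) (kK_nonpos _ (hno n hp))
  · have : c n = 0 := by
      simp [hc, ArithmeticFunction.vonMangoldt_eq_zero_iff.mpr hp]
    simp [this]

lemma pole_side (T y a : ℝ) (ha : 0 < a) :
    ∫ t : ℝ, oK T y t * (1 / ((a : ℂ) + ((T * t : ℝ) : ℂ) * Complex.I))
      = ((∫ v in Set.Ioi (0 : ℝ), Real.exp (-a * v) * kK (T * (v - y)) : ℝ) : ℂ) := by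
  have h1 : ∀ t : ℝ, (1 / ((a : ℂ) + ((T * t : ℝ) : ℂ) * Complex.I))
      = ∫ v in Set.Ioi (0 : ℝ), Complex.exp (-((a : ℂ) + ((T * t : ℝ) : ℂ) * Complex.I) * v) := by
    intro t
    rw [integral_exp_mul_complex_Ioi (by simpa using ha)]
    simp only [Complex.ofReal_zero, mul_zero, Complex.exp_zero, neg_div_neg_eq]
  simp_rw [h1, ← integral_const_mul]
  rw [integral_integral_swap]
  · rw [← integral_complex_ofReal]
    congr 1
    ext v
    rw [Complex.ofReal_mul, ← oK_fourier, ← integral_const_mul]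
    congr 1
    ext t
    rw [Complex.ofReal_exp, mul_left_comm, ← Complex.exp_add]
    congr 2
    push_cast
    ring
  · have hb : Integrable (fun z : ℝ × ℝ => |fK z.1| * Real.exp (-a * z.2))
        (volume.prod (volume.restrict (Set.Ioi 0))) := by
      apply Integrable.mul_prod (f := fun t => |fK t|) (g := fun v => Real.exp (-a * v))
      · exact (fK_cont.integrable_of_hasCompactSupport fK_supp).abs
      · exact integrableOn_exp_mul_Ioi (by linarith) 0
    refine hb.mono' ?_ (Eventually.of_forall ?_)
    · apply Continuous.aestronglyMeasurable
      have := oK_cont T y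
      simp only [Function.uncurry_def]
      fun_prop
    · rintro ⟨t, v⟩
      simp only [Function.uncurry_apply_pair, norm_mul, oK_norm, Complex.norm_exp]
      simp

lemma key_ineq (T y : ℝ) (hT : 0 < T) (G : ℂ → ℂ) (hG : ContinuousOn G {s | 1 ≤ s.re})
    (hGL : ∀ s : ℂ, 1 < s.re →
      LSeries (fun n => ((ArithmeticFunction.vonMangoldt n : ℝ) : ℂ)) s = G s + 1 / (s - 1))
    (hno : ∀ n : ℕ, IsPrimePow n → 2 ≤ (T * (Real.log n - y)) ^ 2) :
    (∫ v in Set.Ioi (0 : ℝ), kK (T * (v - y))) +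
      (∫ t : ℝ, oK T y t * G (1 + ((T * t : ℝ) : ℂ) * Complex.I)).re ≤ 0 := by
  set g : ℝ → ℝ → ℂ := fun a t => oK T y t * G (1 + (|a| : ℝ) + ((T * t : ℝ) : ℂ) * Complex.I)
    with hg
  have hgc : Continuous (Function.uncurry g) := by
    have h := oK_cont T y
    have h2 : Continuous fun z : ℝ × ℝ =>
        G (1 + (|z.1| : ℝ) + ((T * z.2 : ℝ) : ℂ) * Complex.I) := by
      apply hG.comp_continuous
      · fun_prop
      · intro z
        simp
    simp only [Function.uncurry_def, hg]
    exact (h.comp continuous_snd).mul h2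
  have hgz : ∀ a t, t ∉ Set.Icc (-π) π → g a t = 0 := by
    intro a t ht
    simp [hg, oK_zero_of T y t ht]
  have hI2 : Continuous fun a => ∫ t, g a t := by
    rw [← continuousOn_univ]
    exact continuousOn_integral_of_compact_support isCompact_Icc hgc.continuousOn
      fun a t _ ht => hgz a t ht
  have hgi : ∀ a, Integrable (g a) := fun a =>
    (hgc.comp (Continuous.prodMk_right a)).integrable_of_hasCompactSupport
      (HasCompactSupport.intro isCompact_Icc fun t ht => hgz a t ht)
  have hki : Integrable fun v => kK (T * (v - y)) :=
    (kK_int.comp_mul_left' hT.ne').comp_sub_right y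
  have hI1 : Tendsto (fun a : ℝ => ∫ v in Set.Ioi (0 : ℝ), Real.exp (-a * v) * kK (T * (v - y)))
      (𝓝[>] 0) (𝓝 (∫ v in Set.Ioi (0 : ℝ), kK (T * (v - y)))) := by
    apply tendsto_integral_filter_of_dominated_convergence (fun v => |kK (T * (v - y))|)
    · refine Eventually.of_forall fun a => ?_
      apply Continuous.aestronglyMeasurable
      have := kK_cont
      fun_prop
    · filter_upwards [self_mem_nhdsWithin] with a ha
      refine (ae_restrict_iff' measurableSet_Ioi).mpr (Eventually.of_forall fun v hv => ?_)
      rw [norm_mul, Real.norm_eq_abs, Real.norm_eq_abs, Real.abs_exp]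
      have : Real.exp (-a * v) ≤ 1 := by
        rw [Real.exp_le_one_iff]
        have : 0 < a * v := mul_pos ha hv
        linarith
      exact mul_le_of_le_one_left (abs_nonneg _) this
    · exact hki.abs.integrableOn
    · refine Eventually.of_forall fun v => ?_
      have h : Continuous fun a : ℝ => Real.exp (-a * v) * kK (T * (v - y)) := by fun_prop
      have := (h.tendsto 0).mono_left (nhdsWithin_le_nhds (s := Set.Ioi 0))
      simpa using this
  have hI2' : Tendsto (fun a => (∫ t, g a t).re) (𝓝[>] 0) (𝓝 (∫ t, g 0 t).re) :=
    ((Complex.continuous_re.comp hI2).tendsto 0).mono_left nhdsWithin_le_nhds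
  have hlim := hI1.add hI2'
  have h0 : ∫ t, g 0 t = ∫ t : ℝ, oK T y t * G (1 + ((T * t : ℝ) : ℂ) * Complex.I) := by
    simp [hg]
  rw [h0] at hlim
  refine le_of_tendsto hlim ?_
  filter_upwards [self_mem_nhdsWithin] with a ha
  have ha : 0 < a := ha
  have hs := sum_side T y (1 + a) (by linarith) hno
  have hp := pole_side T y a ha
  have hpi : Integrable fun t : ℝ => oK T y t * (1 / ((a : ℂ) + ((T * t : ℝ) : ℂ) * Complex.I)) := by
    apply Continuous.integrable_of_hasCompactSupport
    · refine (oK_cont T y).mul (continuous_const.div (by fun_prop) ?_)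
      intro t h
      have := congrArg Complex.re h
      simp at this
      linarith
    · exact HasCompactSupport.intro (isCompact_Icc (a := -π) (b := π))
        fun t ht => by simp [oK_zero_of T y t ht]
  have hsplit : ∫ t : ℝ, oK T y t * LSeries (fun n => ((ArithmeticFunction.vonMangoldt n : ℝ) : ℂ))
      (((1 + a : ℝ) : ℂ) + ((T * t : ℝ) : ℂ) * Complex.I)
      = (∫ t, g a t) +
        ∫ t : ℝ, oK T y t * (1 / ((a : ℂ) + ((T * t : ℝ) : ℂ) * Complex.I)) := by
    rw [← integral_add (hgi a) hpi]
    congr 1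
    ext t
    rw [hGL _ (by simpa using ha)]
    simp only [hg, abs_of_pos ha]
    push_cast
    rw [mul_add]
    congr 3
    ring
  rw [hsplit, hp, Complex.add_re, Complex.ofReal_re] at hs
  linarith

theorem prime_powers_dense (δ : ℝ) (hδ : 0 < δ) :
    ∀ᶠ y : ℝ in atTop, ∃ n : ℕ, IsPrimePow n ∧ |Real.log n - y| < δ := by
  obtain ⟨G, hG, hGL⟩ := zeta_facts
  set T : ℝ := 2 / δ with hTdef
  have hT : 0 < T := by positivity
  have hJ1 : Tendsto (fun y : ℝ => ∫ v in Set.Ioi (0 : ℝ), kK (T * (v - y))) atTop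
      (𝓝 (∫ v, kK (T * v))) := by
    have := (aecover_Ioi (μ := (volume : Measure ℝ))
      (tendsto_neg_atTop_atBot (G := ℝ))).integral_tendsto_of_countably_generated
      (kK_int.comp_mul_left' hT.ne')
    refine this.congr fun y => ?_
    rw [← integral_indicator measurableSet_Ioi, ← integral_indicator measurableSet_Ioi,
      ← integral_sub_right_eq_self _ y]
    congr 1
    ext v
    simp only [Set.indicator, Set.mem_Ioi]
    congr 1
    simp
  have hpos : 0 < ∫ v, kK (T * v) := by
    rw [Measure.integral_comp_mul_left]
    exact mul_pos (by positivity) kK_integral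
  have hJ2 : Tendsto (fun y : ℝ => ∫ t : ℝ, oK T y t * G (1 + ((T * t : ℝ) : ℂ) * Complex.I)) atTop
      (𝓝 0) := by
    have h := Real.tendsto_integral_exp_smul_cocompact
      (fun t : ℝ => (fK t : ℂ) * G (1 + ((T * t : ℝ) : ℂ) * Complex.I))
    have hw : Tendsto (fun y : ℝ => -(T / (2 * π)) * y) atTop (cocompact ℝ) := by
      have : Tendsto (fun y : ℝ => -(T / (2 * π)) * y) atTop atBot :=
        tendsto_id.const_mul_atTop_of_neg (by
          have : 0 < T / (2 * π) := by positivity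
          linarith)
      exact this.mono_right atBot_le_cocompact
    refine (h.comp hw).congr fun y => ?_
    simp only [Function.comp]
    congr 1
    ext t
    rw [Circle.smul_def, Real.fourierChar_apply, smul_eq_mul, oK]
    have : (2 * π * -(t * (-(T / (2 * π)) * y))) = T * t * y := by
      field_simp
    rw [this]
    ring
  have hJ := hJ1.add ((Complex.continuous_re.tendsto 0).comp hJ2)
  simp only [Complex.zero_re, add_zero] at hJ
  filter_upwards [hJ.eventually (lt_mem_nhds hpos)] with y hy
  by_contra hc
  push Not at hc
  have := key_ineq T y hT G hG hGL ?_
  · simp only [Function.comp] at hy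
    linarith
  · intro n hn
    have h1 := hc n hn
    have h2 : 2 ≤ |T * (Real.log n - y)| := by
      rw [abs_mul, abs_of_pos hT, hTdef]
      calc (2 : ℝ) = 2 / δ * δ := by field_simp
        _ ≤ _ := by gcongr
    rw [← sq_abs]
    nlinarith

theorem ex_Bt_lower_odd (t : ℕ) (ht : 1 ≤ t) (hodd : Odd t) (ε : ℝ) (hε : 0 < ε) :
    ∃ N : ℕ, ∀ n : ℕ, N ≤ n → ∃ G : SimpleGraph (Fin n),
      ¬ ContainsCopy (Bgraph t) G ∧
      (Real.sqrt (((t + 1) / 2 : ℕ) : ℝ) / 2 - ε) * (n : ℝ) ^ (3/2 : ℝ)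
        ≤ (G.edgeSet.ncard : ℝ) := by
  obtain ⟨m, rfl⟩ := hodd
  obtain ⟨k, hk⟩ : ∃ k, k = m + 1 := ⟨_, rfl⟩
  have hk1 : 1 ≤ k := by omega
  have e1 : 2 * m + 1 = 2 * k - 1 := by omega
  have e2 : (2 * m + 1 + 1) / 2 = k := by omega
  rw [e2, e1]
  have hK : (0 : ℝ) < k := by exact_mod_cast hk1
  have hsK : 0 < √(k : ℝ) := Real.sqrt_pos.mpr hK
  set δ : ℝ := ε / (6 * √(k : ℝ)) with hδdef
  have hδ : 0 < δ := by positivity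
  have hlim : Tendsto (fun n : ℕ => Real.log (√((n : ℝ) / k)) - δ) atTop atTop := by
    apply tendsto_atTop_add_const_right
    exact Real.tendsto_log_atTop.comp (Real.tendsto_sqrt_atTop.comp
      (tendsto_natCast_atTop_atTop.atTop_div_const hK))
  have hev := hlim.eventually (prime_powers_dense δ hδ)
  have hev2 : ∀ᶠ n : ℕ in atTop, (k : ℝ) / ε ≤ √(n : ℝ) :=
    (Real.tendsto_sqrt_atTop.comp tendsto_natCast_atTop_atTop).eventually_ge_atTop _
  obtain ⟨N, hN⟩ := eventually_atTop.mp (hev.and (hev2.and (eventually_ge_atTop 1)))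
  refine ⟨N, fun n hn => ?_⟩
  obtain ⟨⟨q, hq, hqy⟩, hn2, hn1⟩ := hN n hn
  have hn0 : (0 : ℝ) < n := by exact_mod_cast hn1
  set x : ℝ := √((n : ℝ) / k) with hx
  have hx0 : 0 < x := Real.sqrt_pos.mpr (by positivity)
  have hxsq : x ^ 2 = n / k := Real.sq_sqrt (by positivity)
  have hq1 : 1 ≤ q := hq.one_lt.le
  have hq0 : (0 : ℝ) < q := by exact_mod_cast hq1
  rw [abs_lt] at hqy
  have hqx : (q : ℝ) ≤ x := by
    rw [← Real.log_le_log_iff hq0 hx0]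
    linarith
  have hqx2 : x * Real.exp (-(2 * δ)) ≤ q := by
    rw [← Real.exp_log hx0, ← Real.exp_add, ← Real.le_log_iff_exp_le hq0]
    linarith
  have hqn : k * q ^ 2 ≤ n := by
    have : (k : ℝ) * q ^ 2 ≤ n := by
      calc (k : ℝ) * q ^ 2 ≤ k * x ^ 2 := by gcongr
        _ = (n : ℝ) := by rw [hxsq]; field_simp
    exact_mod_cast this
  obtain ⟨G, hfree, hedge⟩ := graph_main k n q hk1 hq hqn
  refine ⟨G, hfree, ?_⟩
  have hedge' : (k : ℝ) * k * q ^ 2 * (q - 1) ≤ 2 * (G.edgeSet.ncard : ℝ) := by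
    have : ((k * k * q ^ 2 * (q - 1) : ℕ) : ℝ) ≤ ((2 * G.edgeSet.ncard : ℕ) : ℝ) := by
      exact_mod_cast hedge
    push_cast [Nat.cast_sub hq1] at this
    exact this
  set r : ℝ := √(n : ℝ) with hr
  set w : ℝ := √(k : ℝ) with hw
  have hr2 : r ^ 2 = n := Real.sq_sqrt hn0.le
  have hw2 : w ^ 2 = k := Real.sq_sqrt hK.le
  have hr0 : 0 < r := Real.sqrt_pos.mpr hn0
  have hxr : x = r / w := by rw [hx, Real.sqrt_div hn0.le]
  have hpow : (n : ℝ) ^ (3 / 2 : ℝ) = r ^ 3 := by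
    rw [hr, Real.sqrt_eq_rpow, ← Real.rpow_natCast, ← Real.rpow_mul hn0.le]
    norm_num
  rw [hpow]
  have hexp : 1 - 6 * δ ≤ Real.exp (-(2 * δ)) ^ 3 := by
    rw [← Real.exp_nat_mul]
    have := Real.add_one_le_exp (((3 : ℕ) : ℝ) * (-(2 * δ)))
    push_cast at this ⊢
    linarith
  have hq3 : x ^ 3 * (1 - 6 * δ) ≤ (q : ℝ) ^ 3 := by
    calc x ^ 3 * (1 - 6 * δ) ≤ x ^ 3 * Real.exp (-(2 * δ)) ^ 3 := by gcongr
      _ = (x * Real.exp (-(2 * δ))) ^ 3 := by ring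
      _ ≤ _ := by gcongr
  have hq2 : (q : ℝ) ^ 2 ≤ x ^ 2 := by gcongr
  have hk2 : (k : ℝ) * k * (x ^ 3 * (1 - 6 * δ) - x ^ 2) ≤ 2 * (G.edgeSet.ncard : ℝ) := by
    refine le_trans ?_ hedge'
    have : (k : ℝ) * k * (x ^ 3 * (1 - 6 * δ) - x ^ 2) ≤ k * k * (q ^ 3 - q ^ 2) := by
      gcongr
    linarith
  have h6 : 6 * δ = ε / w := by rw [hδdef]; field_simp
  have hcalc : (k : ℝ) * k * (x ^ 3 * (1 - 6 * δ) - x ^ 2) = (w - ε) * r ^ 3 - w ^ 2 * r ^ 2 := by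
    rw [h6, ← hw2, hxr]
    field_simp
  have hfin : w ^ 2 * r ^ 2 ≤ ε * r ^ 3 := by
    rw [div_le_iff₀ hε] at hn2
    rw [hw2]
    nlinarith [sq_nonneg r]
  rw [hcalc] at hk2
  linarith
end

section
/- For every integer s ≥ 1 and every ε > 0 there exists N such that for all n ≥ N there exists a graph G on n vertices containing no subgraph isomorphic to B_{2s} with e(G) ≥ (2s(s+1)(√(4s²+5s+1) − 2s − 1)/(√(4s²+5s+1) − s − 1)^{3/2} − ε)·n^{3/2}. (That is, ex(n, B_{2s}) ≥ 2s(s+1)(√(4s²+5s+1)−2s−1)/(√(4s²+5s+1)−s−1)^{3/2}·(1+o(1))·n^{3/2}.) -/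
open SimpleGraph

namespace B2s
open Real MeasureTheory Filter Topology Set

/-- weight -/
noncomputable def wt (c t : ℝ) : ℝ := 1 - t * c / (2 * π) + sin (c * t) / (2 * π)

/-- band-limited minorant -/
noncomputable def ph (c u : ℝ) : ℝ := ∫ t in (0 : ℝ)..(2 * π / c), wt c t * cos (t * u)

lemma wt_cont (c : ℝ) : Continuous (wt c) := by unfold wt; fun_prop

lemma wt_bound {c t : ℝ} (hc : 0 < c) (h0 : 0 ≤ t) (h1 : t ≤ 2 * π / c) : |wt c t| ≤ 3 := by
  have hπ := Real.pi_gt_three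
  have a1 : t * c / (2 * π) ≤ 1 := by
    rw [div_le_one (by positivity)]; rwa [le_div_iff₀ hc] at h1
  have a0 : 0 ≤ t * c / (2 * π) := by positivity
  have a2 : |sin (c * t) / (2 * π)| ≤ 1 := by
    rw [abs_div, div_le_one (by positivity), abs_of_pos (by positivity : 0 < 2 * π)]
    have := abs_sin_le_one (c * t)
    linarith
  unfold wt
  rw [abs_le] at a2 ⊢
  constructor <;> linarith [a2.1, a2.2]

lemma wt_nonneg {c t : ℝ} (hc : 0 < c) (h1 : t ≤ 2 * π / c) : 0 ≤ wt c t := by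
  have hπ := Real.pi_gt_three
  rw [le_div_iff₀ hc] at h1
  have : sin (c * t) ≥ - (2 * π - t * c) := by
    have h := Real.sin_le (x := 2 * π - c * t) (by linarith)
    rw [Real.sin_two_pi_sub] at h
    linarith
  have e : wt c t = (2 * π - t * c + sin (c * t)) / (2 * π) := by
    unfold wt; field_simp
  rw [e]
  apply div_nonneg <;> linarith

lemma wt_half {c t : ℝ} (hc : 0 < c) (h0 : 0 ≤ t) (h1 : t ≤ π / c) : 1 / 2 ≤ wt c t := by
  have hπ := Real.pi_gt_three
  rw [le_div_iff₀ hc] at h1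
  have : 0 ≤ sin (c * t) := Real.sin_nonneg_of_nonneg_of_le_pi (by positivity) (by linarith)
  have e : wt c t = (2 * π - t * c + sin (c * t)) / (2 * π) := by
    unfold wt; field_simp
  rw [e, le_div_iff₀ (by positivity)]
  linarith

lemma ph_formula {c : ℝ} (hc : 0 < c) (u : ℝ) :
    u ^ 2 * (c ^ 2 - u ^ 2) * ph c u = c ^ 3 / (2 * π) * (1 - cos (2 * π / c * u)) := by
  have hπ := Real.pi_pos
  unfold ph
  rw [← intervalIntegral.integral_const_mul]
  have hd : ∀ t ∈ uIcc 0 (2 * π / c), HasDerivAt (fun t => (c ^ 2 - u ^ 2) * (u * (1 - t * c / (2 * π)) * sin (t * u) - cos (t * u) * (c / (2 * π)))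
      + u ^ 2 / (2 * π) * (- c * cos (c * t) * cos (t * u) - u * sin (c * t) * sin (t * u)))
      (u ^ 2 * (c ^ 2 - u ^ 2) * (wt c t * cos (t * u))) t := by
    intro t _
    have h1 : HasDerivAt (fun t : ℝ => sin (t * u)) (cos (t * u) * u) t := by
      simpa using ((hasDerivAt_id t).mul_const u).sin
    have h2 : HasDerivAt (fun t : ℝ => cos (t * u)) (- sin (t * u) * u) t := by
      simpa using ((hasDerivAt_id t).mul_const u).cos
    have h3 : HasDerivAt (fun t : ℝ => sin (c * t)) (cos (c * t) * c) t := by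
      simpa using ((hasDerivAt_id t).const_mul c).sin
    have h4 : HasDerivAt (fun t : ℝ => cos (c * t)) (- sin (c * t) * c) t := by
      simpa using ((hasDerivAt_id t).const_mul c).cos
    have h5 : HasDerivAt (fun t : ℝ => u * (1 - t * c / (2 * π))) (u * (- (c / (2 * π)))) t := by
      have := ((((hasDerivAt_id t).mul_const c).div_const (2 * π)).const_sub 1).const_mul u
      simpa using this
    convert! (((h5.mul h1).sub (h2.mul_const (c / (2 * π)))).const_mul (c ^ 2 - u ^ 2)).add
      ((((h4.const_mul (-c)).mul h2).sub ((h3.const_mul u).mul h1)).const_mul (u ^ 2 / (2 * π))) using 1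
    unfold wt
    field_simp
    ring
  rw [intervalIntegral.integral_eq_sub_of_hasDerivAt hd (by
    apply Continuous.intervalIntegrable; unfold wt; fun_prop)]
  have e1 : c * (2 * π / c) = 2 * π := by field_simp
  have e2 : 2 * π / c * c = 2 * π := by field_simp
  rw [e1, e2]
  simp
  field_simp
  ring

lemma ph_bound {c : ℝ} (hc : 0 < c) (u : ℝ) : |ph c u| ≤ 3 * (2 * π / c) := by
  have hπ := Real.pi_pos
  have h := intervalIntegral.norm_integral_le_of_norm_le_const (a := 0) (b := 2 * π / c) (C := 3)
    (f := fun t => wt c t * cos (t * u)) (by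
      intro t ht
      rw [uIoc_of_le (by positivity)] at ht
      rw [norm_mul]
      have h1 := wt_bound hc ht.1.le ht.2
      have h2 := abs_cos_le_one (t * u)
      simp only [Real.norm_eq_abs]
      nlinarith [abs_nonneg (wt c t), abs_nonneg (cos (t * u))])
  rw [sub_zero, abs_of_pos (by positivity)] at h
  exact h

lemma ph_nonpos {c : ℝ} (hc : 0 < c) {u : ℝ} (hu : c < |u|) : ph c u ≤ 0 := by
  have hπ := Real.pi_pos
  have h := ph_formula hc u
  have h1 : c ^ 2 < u ^ 2 := by rw [← sq_abs u]; gcongr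
  have h2 : 0 ≤ c ^ 3 / (2 * π) * (1 - cos (2 * π / c * u)) := by
    apply mul_nonneg (by positivity); linarith [cos_le_one (2 * π / c * u)]
  by_contra h3
  push Not at h3
  have h4 : u ^ 2 * (c ^ 2 - u ^ 2) < 0 := by
    apply mul_neg_of_pos_of_neg <;> nlinarith
  nlinarith

lemma ph_cont (c : ℝ) : Continuous (ph c) := by
  unfold ph
  apply intervalIntegral.continuous_parametric_intervalIntegral_of_continuous'
  have := wt_cont c
  fun_prop

lemma ph_decay {c : ℝ} (hc : 0 < c) : ∃ K : ℝ, ∀ u, |ph c u| ≤ K * (1 + u ^ 2)⁻¹ := by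
  have hπ := Real.pi_pos
  set M := 3 * (2 * π / c) with hM
  have hM0 : 0 < M := by positivity
  refine ⟨M * (1 + 4 * c ^ 2) + (c ^ 3 / (2 * π) * 2) * (1 + (4 * c ^ 2)⁻¹) / (3 * c ^ 2), fun u => ?_⟩
  rw [← div_eq_mul_inv, le_div_iff₀ (by positivity)]
  have hb := ph_bound hc u
  rw [← hM] at hb
  by_cases hu : u ^ 2 ≤ 4 * c ^ 2
  · calc |ph c u| * (1 + u ^ 2) ≤ M * (1 + 4 * c ^ 2) := by gcongr
      _ ≤ _ := by
        have : 0 ≤ (c ^ 3 / (2 * π) * 2) * (1 + (4 * c ^ 2)⁻¹) / (3 * c ^ 2) := by positivity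
        linarith
  · push Not at hu
    have hup : 0 < u ^ 2 := by nlinarith
    have h := congrArg abs (ph_formula hc u)
    rw [abs_mul, abs_mul, abs_mul, abs_of_pos hup, abs_of_neg (by nlinarith : c ^ 2 - u ^ 2 < 0),
      abs_of_pos (by positivity : 0 < c ^ 3 / (2 * π))] at h
    have h1 : |1 - cos (2 * π / c * u)| ≤ 2 := by
      rw [abs_le]; constructor <;> linarith [cos_le_one (2 * π / c * u), neg_one_le_cos (2 * π / c * u)]
    have h2 : u ^ 2 * (3 * c ^ 2) * |ph c u| ≤ c ^ 3 / (2 * π) * 2 := by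
      calc u ^ 2 * (3 * c ^ 2) * |ph c u| ≤ u ^ 2 * (-(c ^ 2 - u ^ 2)) * |ph c u| := by
            gcongr; linarith
        _ ≤ _ := by rw [h]; gcongr
    have h3 : |ph c u| * (1 + u ^ 2) ≤ (c ^ 3 / (2 * π) * 2) * (1 + (4 * c ^ 2)⁻¹) / (3 * c ^ 2) := by
      rw [le_div_iff₀ (by positivity)]
      have : 1 + u ^ 2 ≤ u ^ 2 * (1 + (4 * c ^ 2)⁻¹) := by
        have : 1 ≤ u ^ 2 * (4 * c ^ 2)⁻¹ := by
          rw [← div_eq_mul_inv, le_div_iff₀ (by positivity)]; linarith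
        linarith
      calc |ph c u| * (1 + u ^ 2) * (3 * c ^ 2) ≤ |ph c u| * (u ^ 2 * (1 + (4 * c ^ 2)⁻¹)) * (3 * c ^ 2) := by gcongr
        _ = (u ^ 2 * (3 * c ^ 2) * |ph c u|) * (1 + (4 * c ^ 2)⁻¹) := by ring
        _ ≤ _ := by gcongr
    have : 0 ≤ M * (1 + 4 * c ^ 2) := by positivity
    linarith

lemma ph_int {c : ℝ} (hc : 0 < c) : Integrable (ph c) := by
  obtain ⟨K, hK⟩ := ph_decay hc
  exact (integrable_inv_one_add_sq.const_mul K).mono' (ph_cont c).aestronglyMeasurable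
    (Eventually.of_forall hK)

lemma ph_even (c u : ℝ) : ph c (-u) = ph c u := by
  unfold ph; simp

/-- Laplace transform of a shifted cosine -/
lemma inner_int {η : ℝ} (hη : 0 < η) (t y : ℝ) :
    ∫ v in Ioi (0 : ℝ), rexp (-η * v) * cos (t * (v - y)) =
      (Complex.exp (Complex.I * t * y) / (η + Complex.I * t)).re := by
  have hre : (-(η + Complex.I * t) : ℂ).re < 0 := by simp [hη]
  have h := integral_exp_mul_complex_Ioi hre 0
  have hi := integrableOn_exp_mul_complex_Ioi hre 0
  have h2 : ∫ v in Ioi (0 : ℝ), Complex.exp (Complex.I * t * y) * Complex.exp (-(η + Complex.I * t) * v) =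
      Complex.exp (Complex.I * t * y) / (η + Complex.I * t) := by
    rw [integral_const_mul, h, neg_div_neg_eq]; simp [div_eq_mul_inv]
  rw [← h2]
  have := integral_re (𝕜 := ℂ) (hi.const_mul (Complex.exp (Complex.I * t * y)))
  simp only [RCLike.re_to_complex] at this
  rw [← this]
  congr 1
  ext v
  rw [← Complex.exp_add, Complex.exp_re]
  simp
  rw [← Real.cos_neg]; congr 1; ring

lemma fub {c η : ℝ} (hc : 0 < c) (hη : 0 < η) (y : ℝ) :
    ∫ v in Ioi (0 : ℝ), rexp (-η * v) * ph c (v - y) =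
      ∫ t in (0 : ℝ)..(2 * π / c), wt c t * (Complex.exp (Complex.I * t * y) / (η + Complex.I * t)).re := by
  have hT : 0 ≤ 2 * π / c := by positivity
  have hw := wt_cont c
  simp_rw [← inner_int hη]
  rw [intervalIntegral.integral_of_le hT]
  unfold ph
  simp_rw [intervalIntegral.integral_of_le hT, ← integral_const_mul]
  rw [integral_integral_swap]
  · congr 1; ext t; congr 1; ext v; ring
  · have h1 : IntegrableOn (fun v : ℝ => rexp (-η * v)) (Ioi 0) := exp_neg_integrableOn_Ioi 0 hη
    have h2 : IntegrableOn (fun t : ℝ => (3 : ℝ)) (Ioc 0 (2 * π / c)) := by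
      simp
    have h3 := Integrable.mul_prod h1 h2
    refine h3.mono' (Continuous.aestronglyMeasurable ?_) ?_
    · unfold Function.uncurry; fun_prop
    · rw [Measure.prod_restrict, ae_restrict_iff' (measurableSet_Ioi.prod measurableSet_Ioc)]
      refine Eventually.of_forall ?_
      rintro ⟨v, t⟩ ⟨hv, ht⟩
      simp only [Function.uncurry]
      rw [norm_mul, norm_mul, Real.norm_eq_abs, Real.norm_eq_abs, Real.norm_eq_abs, abs_of_pos (exp_pos _)]
      have h1 := wt_bound hc ht.1.le ht.2
      have h2 := abs_cos_le_one (t * (v - y))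
      have : |wt c t| * |cos (t * (v - y))| ≤ 3 := by
        nlinarith [abs_nonneg (wt c t), abs_nonneg (cos (t * (v - y)))]
      gcongr

lemma lap_tendsto {f : ℝ → ℝ} (hf : IntegrableOn f (Ioi 0)) :
    Tendsto (fun η : ℝ => ∫ v in Ioi (0 : ℝ), rexp (-η * v) * f v) (𝓝[>] 0) (𝓝 (∫ v in Ioi (0 : ℝ), f v)) := by
  apply tendsto_integral_filter_of_dominated_convergence (fun v => ‖f v‖)
  · exact Eventually.of_forall fun η => (Continuous.aestronglyMeasurable (by fun_prop)).mul hf.1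
  · filter_upwards [self_mem_nhdsWithin] with η hη
    rw [ae_restrict_iff' measurableSet_Ioi]
    refine Eventually.of_forall fun v hv => ?_
    rw [norm_mul, Real.norm_eq_abs, abs_of_pos (exp_pos _)]
    have : rexp (-η * v) ≤ 1 := by
      rw [Real.exp_le_one_iff]
      have := mul_pos (mem_Ioi.1 hη) (mem_Ioi.1 hv)
      linarith
    nlinarith [norm_nonneg (f v)]
  · exact hf.norm
  · refine Eventually.of_forall fun v => ?_
    have : Tendsto (fun η : ℝ => rexp (-η * v) * f v) (𝓝 0) (𝓝 (rexp (-0 * v) * f v)) :=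
      Continuous.tendsto (by fun_prop) 0
    simp at this
    simpa using this.mono_left nhdsWithin_le_nhds

lemma ph_half_pos {c : ℝ} (hc : 0 < c) : π / 4 ≤ ∫ v in Ioi (0 : ℝ), ph c v := by
  have hπ := Real.pi_pos
  have hlim := lap_tendsto (ph_int hc).integrableOn
  have hat : Tendsto (fun η : ℝ => arctan (π / c * η⁻¹) / 2) (𝓝[>] 0) (𝓝 (π / 2 / 2)) := by
    apply Tendsto.div_const
    have h1 : Tendsto (fun η : ℝ => π / c * η⁻¹) (𝓝[>] 0) atTop :=
      Tendsto.const_mul_atTop (by positivity) tendsto_inv_nhdsGT_zero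
    exact (tendsto_nhdsWithin_iff.1 tendsto_arctan_atTop).1.comp h1
  have : π / 4 = π / 2 / 2 := by ring
  rw [this]
  refine le_of_tendsto_of_tendsto hat hlim ?_
  filter_upwards [self_mem_nhdsWithin] with η hη
  have hη : 0 < η := hη
  have h := fub hc hη 0
  simp only [sub_zero] at h
  rw [h]
  have e : ∀ t : ℝ, (Complex.exp (Complex.I * t * (0 : ℝ)) / (η + Complex.I * t)).re = η / (η ^ 2 + t ^ 2) := by
    intro t
    simp [Complex.normSq_apply]
    ring
  simp_rw [e]
  have hpos : ∀ t : ℝ, 0 < η ^ 2 + t ^ 2 := fun t => by positivity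
  have hcont : Continuous fun t : ℝ => wt c t * (η / (η ^ 2 + t ^ 2)) := by
    have := wt_cont c
    have h2 : Continuous fun t : ℝ => η / (η ^ 2 + t ^ 2) :=
      continuous_const.div (by fun_prop) (fun t => (hpos t).ne')
    fun_prop
  have hle : π / c ≤ 2 * π / c := by gcongr; linarith
  have hpc : 0 ≤ π / c := by positivity
  rw [← intervalIntegral.integral_add_adjacent_intervals (b := π / c) (hcont.intervalIntegrable _ _) (hcont.intervalIntegrable _ _)]
  have i2 : 0 ≤ ∫ t in (π / c)..(2 * π / c), wt c t * (η / (η ^ 2 + t ^ 2)) := by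
    apply intervalIntegral.integral_nonneg hle
    intro t ht
    exact mul_nonneg (wt_nonneg hc ht.2) (by positivity)
  have i1 : arctan (π / c * η⁻¹) / 2 ≤ ∫ t in (0 : ℝ)..(π / c), wt c t * (η / (η ^ 2 + t ^ 2)) := by
    have hd : ∀ t ∈ uIcc 0 (π / c), HasDerivAt (fun t => arctan (t * η⁻¹) / 2) (1 / 2 * (η / (η ^ 2 + t ^ 2))) t := by
      intro t _
      have := (((hasDerivAt_id t).mul_const η⁻¹).arctan).div_const 2
      convert! this using 1
      have := hpos t
      simp
      field_simp
    have hcont2 : Continuous fun t : ℝ => 1 / 2 * (η / (η ^ 2 + t ^ 2)) :=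
      continuous_const.mul (continuous_const.div (by fun_prop) (fun t => (hpos t).ne'))
    have := intervalIntegral.integral_eq_sub_of_hasDerivAt hd (hcont2.intervalIntegrable _ _)
    simp only [zero_mul, arctan_zero, zero_div, sub_zero] at this
    rw [← this]
    apply intervalIntegral.integral_mono_on hpc (hcont2.intervalIntegrable _ _) (hcont.intervalIntegrable _ _)
    intro t ht
    have := wt_half hc ht.1 ht.2
    gcongr
  linarith

lemma ph_total {c : ℝ} (hc : 0 < c) : 1 < ∫ v, ph c v := by
  have h1 : ∫ v, ph c v = ∫ v, ph c |v| := by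
    congr 1; ext v
    rcases abs_choice v with h | h <;> rw [h]
    rw [ph_even]
  rw [h1, integral_comp_abs]
  linarith [ph_half_pos hc, Real.pi_gt_three]

lemma shift_tendsto {c : ℝ} (hc : 0 < c) :
    Tendsto (fun y : ℝ => ∫ v in Ioi (0 : ℝ), ph c (v - y)) atTop (𝓝 (∫ v, ph c v)) := by
  have h : ∀ y : ℝ, ∫ v in Ioi (0 : ℝ), ph c (v - y) = ∫ v in Ioi (-y), ph c v := by
    intro y
    have := (measurePreserving_sub_right volume y).setIntegral_preimage_emb
      (measurableEmbedding_subRight y) (ph c) (Ioi (-y))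
    rw [← this]
    congr 2
    ext v; simp
  simp_rw [h]
  exact (aecover_Ioi tendsto_neg_atTop_atBot).integral_tendsto_of_countably_generated (ph_int hc)


open Complex in
lemma exists_H : ∃ H : ℂ → ℂ, ContinuousOn H {s | 1 ≤ s.re} ∧
    ∀ s : ℂ, 1 < s.re → LSeries (fun n => (ArithmeticFunction.vonMangoldt n : ℂ)) s = H s + 1 / (s - 1) := by
  refine ⟨ArithmeticFunction.vonMangoldt.LFunctionResidueClassAux (q := 1) 1,
    ArithmeticFunction.vonMangoldt.continuousOn_LFunctionResidueClassAux _, fun s hs => ?_⟩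
  have h := ArithmeticFunction.vonMangoldt.eqOn_LFunctionResidueClassAux (q := 1) (a := 1) isUnit_one hs
  simp only at h
  rw [h]
  have : (fun n : ℕ => (ArithmeticFunction.vonMangoldt n : ℂ)) =
      (fun n : ℕ => ((ArithmeticFunction.vonMangoldt.residueClass (1 : ZMod 1) n : ℝ) : ℂ)) := by
    ext n
    simp only [ArithmeticFunction.vonMangoldt.residueClass]
    rw [Set.indicator_of_mem]
    simp only [Set.mem_ofPred_eq]
    exact Subsingleton.elim _ _
  rw [this]
  simp

lemma term_re {η : ℝ} (y : ℝ) (n : ℕ) (t : ℝ) :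
    (Complex.exp (Complex.I * t * y) * LSeries.term (fun n => (ArithmeticFunction.vonMangoldt n : ℂ)) (1 + η + Complex.I * t) n).re
      = ArithmeticFunction.vonMangoldt n * (n : ℝ) ^ (-(1 + η)) * cos (t * (log n - y)) := by
  rcases eq_or_ne n 0 with rfl | hn
  · simp
  · have hn' : (0 : ℝ) < n := by positivity
    have hnc : (n : ℂ) ≠ 0 := by exact_mod_cast hn
    rw [LSeries.term_of_ne_zero hn, Complex.cpow_def_of_ne_zero hnc, ← Complex.natCast_log, div_eq_mul_inv,
      ← Complex.exp_neg, Real.rpow_def_of_pos hn']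
    have : Complex.exp (Complex.I * t * y) * ((ArithmeticFunction.vonMangoldt n : ℂ) * Complex.exp (-((Real.log n : ℝ) * (1 + η + Complex.I * t))))
      = ((ArithmeticFunction.vonMangoldt n * rexp (Real.log n * (-(1 + η))) : ℝ) : ℂ) * Complex.exp ((t * (y - Real.log n) : ℝ) * Complex.I) := by
      push_cast
      rw [mul_left_comm, ← Complex.exp_add, mul_assoc (ArithmeticFunction.vonMangoldt n : ℂ), ← Complex.exp_add]
      congr 2
      ring
    rw [this, Complex.re_ofReal_mul, Complex.exp_ofReal_mul_I_re]
    congr 1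
    rw [← Real.cos_neg]; congr 1; ring

lemma summ_b {η : ℝ} (hη : 0 < η) :
    Summable (fun n : ℕ => ArithmeticFunction.vonMangoldt n * (n : ℝ) ^ (-(1 + η))) := by
  have h := ArithmeticFunction.LSeriesSummable_vonMangoldt (s := 1 + η + Complex.I * (0 : ℝ)) (by simp [hη])
  have h2 := (Complex.hasSum_re h.hasSum).summable
  refine h2.congr fun n => ?_
  have := term_re (η := η) 0 n 0
  simpa using this

lemma sum_formula {c η : ℝ} (hc : 0 < c) (hη : 0 < η) (y : ℝ) :
    HasSum (fun n : ℕ => ArithmeticFunction.vonMangoldt n * (n : ℝ) ^ (-(1 + η)) * ph c (log n - y))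
      (∫ t in (0 : ℝ)..(2 * π / c), wt c t * (Complex.exp (Complex.I * t * y) *
        LSeries (fun n => (ArithmeticFunction.vonMangoldt n : ℂ)) (1 + η + Complex.I * t)).re) := by
  have hT : 0 ≤ 2 * π / c := by positivity
  have hw := wt_cont c
  set b : ℕ → ℝ := fun n => ArithmeticFunction.vonMangoldt n * (n : ℝ) ^ (-(1 + η)) with hb
  have hb0 : ∀ n, 0 ≤ b n := fun n => mul_nonneg ArithmeticFunction.vonMangoldt_nonneg (by positivity)
  have hbs : Summable b := summ_b hη
  have key := intervalIntegral.hasSum_integral_of_dominated_convergence (μ := volume) (a := 0) (b := 2 * π / c)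
    (F := fun (n : ℕ) (t : ℝ) => wt c t * (b n * cos (t * (log n - y))))
    (f := fun t : ℝ => wt c t * (Complex.exp (Complex.I * t * y) *
        LSeries (fun n => (ArithmeticFunction.vonMangoldt n : ℂ)) (1 + η + Complex.I * t)).re)
    (bound := fun n _ => 3 * b n) ?_ ?_ ?_ ?_ ?_
  · convert! key using 2 with n
    unfold ph
    rw [← intervalIntegral.integral_const_mul]
    congr 1; ext t; ring
  · intro n
    exact Continuous.aestronglyMeasurable (by fun_prop)
  · intro n
    refine Eventually.of_forall fun t ht => ?_
    rw [uIoc_of_le hT] at ht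
    rw [norm_mul, norm_mul, Real.norm_eq_abs, Real.norm_eq_abs, Real.norm_eq_abs, abs_of_nonneg (hb0 n)]
    have h1 := wt_bound hc ht.1.le ht.2
    have h2 := abs_cos_le_one (t * (log n - y))
    have : b n * |cos (t * (log n - y))| ≤ b n * 1 := by
      have := hb0 n
      gcongr
    rw [mul_one] at this
    have h0 := hb0 n
    gcongr
  · exact Eventually.of_forall fun t _ => hbs.mul_left 3
  · exact intervalIntegrable_const
  · refine Eventually.of_forall fun t _ => ?_
    apply HasSum.mul_left
    have h := (ArithmeticFunction.LSeriesSummable_vonMangoldt (s := 1 + η + Complex.I * t) (by simp [hη])).hasSum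
    have h2 := Complex.hasSum_re (h.mul_left (Complex.exp (Complex.I * t * y)))
    convert! h2 using 2 with n
    exact (term_re y n t).symm

lemma main_identity {H : ℂ → ℂ} (hH : ContinuousOn H {s | 1 ≤ s.re})
    (hH2 : ∀ s : ℂ, 1 < s.re → LSeries (fun n => (ArithmeticFunction.vonMangoldt n : ℂ)) s = H s + 1 / (s - 1))
    {c η : ℝ} (hc : 0 < c) (hη : 0 < η) (y : ℝ) :
    HasSum (fun n : ℕ => ArithmeticFunction.vonMangoldt n * (n : ℝ) ^ (-(1 + η)) * ph c (log n - y))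
      ((∫ t in (0 : ℝ)..(2 * π / c), wt c t * (Complex.exp (Complex.I * t * y) * H (1 + η + Complex.I * t)).re)
        + ∫ v in Ioi (0 : ℝ), rexp (-η * v) * ph c (v - y)) := by
  have h := sum_formula hc hη y
  rw [fub hc hη, ← intervalIntegral.integral_add]
  · convert! h using 1
    congr 1
    ext t
    rw [hH2 _ (by simp [hη])]
    rw [← mul_add, ← Complex.add_re]
    congr 2
    rw [mul_add]; congr 1
    rw [mul_one_div]; congr 1; ring
  · apply Continuous.intervalIntegrable
    have hw := wt_cont c
    have : Continuous fun t : ℝ => H (1 + η + Complex.I * t) := by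
      apply hH.comp_continuous (by fun_prop)
      intro t; simp [hη.le]
    exact hw.mul (Complex.continuous_re.comp
      ((by fun_prop : Continuous fun t : ℝ => Complex.exp (Complex.I * t * y)).mul this))
  · apply Continuous.intervalIntegrable
    have hw := wt_cont c
    have : Continuous fun t : ℝ => Complex.exp (Complex.I * t * y) / (η + Complex.I * t) := by
      apply Continuous.div (by fun_prop) (by fun_prop)
      intro t h
      have := congrArg Complex.re h
      simp at this
      exact hη.ne' this
    fun_prop

lemma H_tendsto {H : ℂ → ℂ} (hH : ContinuousOn H {s | 1 ≤ s.re}) {c : ℝ} (hc : 0 < c) (y : ℝ) :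
    Tendsto (fun η : ℝ => ∫ t in (0 : ℝ)..(2 * π / c), wt c t * (Complex.exp (Complex.I * t * y) * H (1 + η + Complex.I * t)).re)
     (𝓝[>] 0) (𝓝 (∫ t in (0 : ℝ)..(2 * π / c), wt c t * (Complex.exp (Complex.I * t * y) * H (1 + Complex.I * t)).re)) := by
  have hw := wt_cont c
  have hc2 : Continuous fun η : ℝ => ∫ t in (0 : ℝ)..(2 * π / c), wt c t * (Complex.exp (Complex.I * t * y) * H (1 + (max η 0 : ℝ) + Complex.I * t)).re := by
    apply intervalIntegral.continuous_parametric_intervalIntegral_of_continuous'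
    have : Continuous fun z : ℝ × ℝ => H (1 + (max z.1 0 : ℝ) + Complex.I * z.2) := by
      apply hH.comp_continuous (by fun_prop)
      intro t; simp
    exact (hw.comp continuous_snd).mul (Complex.continuous_re.comp
      ((by fun_prop : Continuous fun z : ℝ × ℝ => Complex.exp (Complex.I * z.2 * y)).mul this))
  have := (hc2.tendsto 0).mono_left (nhdsWithin_le_nhds (s := Ioi 0))
  simp only [max_self, Complex.ofReal_zero, add_zero] at this
  refine this.congr' ?_
  filter_upwards [self_mem_nhdsWithin] with η hη
  rw [max_eq_left (le_of_lt hη)]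

lemma RL {H : ℂ → ℂ} (hH : ContinuousOn H {s | 1 ≤ s.re}) {c : ℝ} (hc : 0 < c) :
    Tendsto (fun y : ℝ => ∫ t in (0 : ℝ)..(2 * π / c), wt c t * (Complex.exp (Complex.I * t * y) * H (1 + Complex.I * t)).re)
      atTop (𝓝 0) := by
  have hw := wt_cont c
  have hπ := Real.pi_pos
  have hT : 0 ≤ 2 * π / c := by positivity
  have hHc : Continuous fun t : ℝ => H (1 + Complex.I * t) := by
    apply hH.comp_continuous (by fun_prop)
    intro t; simp
  let f : ℝ → ℂ := (Ioc 0 (2 * π / c)).indicator (fun t => (wt c t : ℂ) * H (1 + Complex.I * t))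
  have h := Real.tendsto_integral_exp_smul_cocompact f
  have h2 : Tendsto (fun y : ℝ => -y / (2 * π)) atTop (cocompact ℝ) := by
    apply Tendsto.mono_right _ atBot_le_cocompact
    exact (tendsto_neg_atTop_atBot).atBot_div_const (by positivity)
  have h3 := (Complex.continuous_re.tendsto 0).comp (h.comp h2)
  rw [Complex.zero_re] at h3
  refine h3.congr fun y => ?_
  simp only [Function.comp]
  have e : ∀ t : ℝ, Real.fourierChar (-(t * (-y / (2 * π)))) • f t =
      (Ioc 0 (2 * π / c)).indicator (fun t : ℝ => (wt c t : ℂ) * (Complex.exp (Complex.I * t * y) * H (1 + Complex.I * t))) t := by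
    intro t
    by_cases ht : t ∈ Ioc 0 (2 * π / c)
    · simp only [f, indicator_of_mem ht]
      rw [Circle.smul_def, Real.fourierChar_apply, smul_eq_mul]
      rw [mul_left_comm]
      congr 3
      push_cast
      have : (π : ℂ) ≠ 0 := by exact_mod_cast hπ.ne'
      field_simp
    · simp only [f, indicator_of_notMem ht, smul_zero]
  simp_rw [e]
  rw [integral_indicator measurableSet_Ioc, intervalIntegral.integral_of_le hT]
  have hi : IntegrableOn (fun t : ℝ => (wt c t : ℂ) * (Complex.exp (Complex.I * t * y) * H (1 + Complex.I * t))) (Ioc 0 (2 * π / c)) := by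
    apply Continuous.integrableOn_Ioc
    exact (Complex.continuous_ofReal.comp hw).mul
      ((by fun_prop : Continuous fun t : ℝ => Complex.exp (Complex.I * t * y)).mul hHc)
  have := integral_re (𝕜 := ℂ) hi
  simp only [RCLike.re_to_complex, Complex.re_ofReal_mul] at this
  exact this.symm

/-- integers in the multiplicative window -/
noncomputable def win (c y : ℝ) : Finset ℕ := (Finset.Icc 1 ⌊rexp (y + c)⌋₊).filter (fun n => rexp (y - c) ≤ n)

lemma sum_lower {c : ℝ} (hc : 0 < c) : ∀ᶠ y in atTop,
    1 ≤ ∑ n ∈ win c y, (3 * (2 * π / c)) * (ArithmeticFunction.vonMangoldt n * (n : ℝ)⁻¹) := by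
  obtain ⟨H, hH, hH2⟩ := exists_H
  have hlim := (RL hH hc).add (shift_tendsto hc)
  rw [zero_add] at hlim
  filter_upwards [hlim (Ioi_mem_nhds (ph_total hc))] with y hy
  refine (le_of_lt hy).trans ?_
  have hi : IntegrableOn (fun v => ph c (v - y)) (Ioi 0) := ((ph_int hc).comp_sub_right y).integrableOn
  have hl := (H_tendsto hH hc y).add (lap_tendsto hi)
  refine le_of_tendsto hl ?_
  filter_upwards [self_mem_nhdsWithin] with η hη
  have hη : 0 < η := hη
  have hs := main_identity hH hH2 hc hη y
  have hg : HasSum (fun n : ℕ => if n ∈ win c y then (3 * (2 * π / c)) * (ArithmeticFunction.vonMangoldt n * (n : ℝ)⁻¹) else 0)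
      (∑ n ∈ win c y, (3 * (2 * π / c)) * (ArithmeticFunction.vonMangoldt n * (n : ℝ)⁻¹)) := by
    have := hasSum_sum_of_ne_finset_zero (L := SummationFilter.unconditional ℕ) (f := fun n : ℕ => if n ∈ win c y then (3 * (2 * π / c)) * (ArithmeticFunction.vonMangoldt n * (n : ℝ)⁻¹) else 0)
      (s := win c y) (fun n hn => if_neg hn)
    convert! this using 1
    exact Finset.sum_congr rfl fun n hn => (if_pos hn).symm
  refine hasSum_le (fun n => ?_) hs hg
  have hΛ : 0 ≤ ArithmeticFunction.vonMangoldt n := ArithmeticFunction.vonMangoldt_nonneg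
  have hb0 : 0 ≤ ArithmeticFunction.vonMangoldt n * (n : ℝ) ^ (-(1 + η)) := mul_nonneg hΛ (by positivity)
  rcases eq_or_ne n 0 with rfl | hn
  · simp
  have hn1 : (1 : ℝ) ≤ n := by exact_mod_cast Nat.one_le_iff_ne_zero.2 hn
  split_ifs with h
  · have hp : ph c (log n - y) ≤ 3 * (2 * π / c) := (le_abs_self _).trans (ph_bound hc _)
    have : (n : ℝ) ^ (-(1 + η)) ≤ (n : ℝ)⁻¹ := by
      rw [← Real.rpow_neg_one]
      exact Real.rpow_le_rpow_of_exponent_le hn1 (by linarith)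
    have hM : 0 ≤ 3 * (2 * π / c) := by positivity
    calc _ ≤ ArithmeticFunction.vonMangoldt n * (n : ℝ) ^ (-(1 + η)) * (3 * (2 * π / c)) := by gcongr
      _ ≤ ArithmeticFunction.vonMangoldt n * (n : ℝ)⁻¹ * (3 * (2 * π / c)) := by gcongr
      _ = _ := by ring
  · apply mul_nonpos_of_nonneg_of_nonpos hb0
    apply ph_nonpos hc
    by_contra h'
    push Not at h'
    apply h
    rw [abs_le] at h'
    simp only [win, Finset.mem_filter, Finset.mem_Icc]
    have hn0 : (0 : ℝ) < n := by linarith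
    refine ⟨⟨Nat.one_le_iff_ne_zero.2 hn, Nat.le_floor ?_⟩, ?_⟩
    · rw [← Real.log_le_iff_le_exp hn0]; linarith [h'.2]
    · rw [← Real.le_log_iff_exp_le hn0]; linarith [h'.1]

lemma exists_prime_near (δ : ℝ) (hδ : 0 < δ) : ∃ X₀ : ℝ, ∀ X : ℝ, X₀ ≤ X →
    ∃ p : ℕ, p.Prime ∧ (1 - δ) * X ≤ p ∧ (p : ℝ) ≤ X := by
  have hc : 0 < δ / 2 := by positivity
  set c := δ / 2 with hcd
  obtain ⟨Y, hY⟩ := eventually_atTop.1 (sum_lower hc)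
  obtain ⟨C, hC⟩ := Chebyshev.psi_sub_theta_le_mul_sqrt
  have hπ := Real.pi_pos
  set M := 3 * (2 * π / c) with hM
  have hM0 : 0 < M := by positivity
  set K := M * C * rexp (2 * c) with hK
  refine ⟨max (rexp (Y + c)) (K ^ 2 + 1), fun X hX => ?_⟩
  have hX1 := (le_max_left _ _).trans hX
  have hX2 := (le_max_right _ _).trans hX
  have hX0 : 0 < X := (Real.exp_pos _).trans_le hX1
  have hy : Y ≤ log X - c := by
    have := (Real.le_log_iff_exp_le hX0).2 hX1
    linarith
  have h1 := hY _ hy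
  have hE : rexp (log X - c - c) = X * rexp (-(2 * c)) := by
    rw [show log X - c - c = log X + -(2 * c) by ring, Real.exp_add, Real.exp_log hX0]
  by_contra hno
  push Not at hno
  have hle : ∑ n ∈ win c (log X - c), M * (ArithmeticFunction.vonMangoldt n * (n : ℝ)⁻¹)
      ≤ M * (X * rexp (-(2 * c)))⁻¹ * (C * √X) := by
    have hXe : 0 < X * rexp (-(2 * c)) := by positivity
    calc _ ≤ ∑ n ∈ win c (log X - c), M * (X * rexp (-(2 * c)))⁻¹ * ArithmeticFunction.vonMangoldt n := by
          refine Finset.sum_le_sum fun n hn => ?_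
          simp only [win, Finset.mem_filter, hE] at hn
          have hinv : (n : ℝ)⁻¹ ≤ (X * rexp (-(2 * c)))⁻¹ := inv_anti₀ hXe hn.2
          have hΛ : 0 ≤ ArithmeticFunction.vonMangoldt n := ArithmeticFunction.vonMangoldt_nonneg
          calc _ ≤ M * (ArithmeticFunction.vonMangoldt n * (X * rexp (-(2 * c)))⁻¹) := by gcongr
            _ = _ := by ring
      _ = M * (X * rexp (-(2 * c)))⁻¹ * ∑ n ∈ win c (log X - c), ArithmeticFunction.vonMangoldt n := by
          rw [Finset.mul_sum]
      _ ≤ _ := by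
          gcongr
          refine le_trans ?_ (hC X)
          rw [Chebyshev.psi_sub_theta_eq_sum_not_prime]
          refine Finset.sum_le_sum_of_subset_of_nonneg ?_ fun _ _ _ => ArithmeticFunction.vonMangoldt_nonneg
          intro n hn
          simp only [win, Finset.mem_filter, hE, Finset.mem_Icc, sub_add_cancel, Real.exp_log hX0] at hn
          simp only [Finset.mem_filter, Finset.mem_Ioc]
          refine ⟨⟨by omega, hn.1.2⟩, fun hp => ?_⟩
          have hnX : (n : ℝ) ≤ X := (Nat.le_floor_iff hX0.le).1 hn.1.2
          have h2 := Real.add_one_le_exp (-(2 * c))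
          have h3 : (1 - δ) * X ≤ n := by
            refine le_trans ?_ hn.2
            rw [mul_comm]
            gcongr
            linarith
          exact absurd hnX (not_le.2 (hno n hp h3))
  have hs0 : 0 < √X := Real.sqrt_pos.2 hX0
  have hss : √X * √X = X := Real.mul_self_sqrt hX0.le
  have h4 := h1.trans hle
  have h5 : M * (X * rexp (-(2 * c)))⁻¹ * (C * √X) = K / √X := by
    rw [hK, Real.exp_neg]
    nth_rewrite 1 [← hss]
    field_simp
  rw [h5, le_div_iff₀ hs0, one_mul] at h4
  nlinarith

end B2s

namespace B2s

/-- valid labels -/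
def Valid (p s : ℕ) (S : Finset (ZMod p)) (x : ZMod p × ZMod p × Fin (s + 1)) : Prop :=
  x.2.2.val < s ∨ x.1 ∈ S

/-- The blown-up polarity-type graph. -/
def gr (p s : ℕ) (S : Finset (ZMod p)) : SimpleGraph {x // Valid p s S x} where
  Adj x y := x.1.1 ≠ y.1.1 ∧ x.1.2.1 + y.1.2.1 = x.1.1 * y.1.1 ∧
    ¬ (x.1.1 ∈ S ∧ y.1.1 ∈ S ∧ x.1.2.2 = y.1.2.2)
  symm := ⟨fun x y h => ⟨h.1.symm, by rw [add_comm, h.2.1, mul_comm], fun h' => h.2.2 ⟨h'.2.1, h'.1, h'.2.2.symm⟩⟩⟩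
  loopless := ⟨fun x h => h.1 rfl⟩

lemma c4 {p : ℕ} [Fact p.Prime] {a b a' b' c d c' d' : ZMod p}
    (h1 : b + d = a * c) (h2 : b + d' = a * c') (h3 : b' + d = a' * c) (h4 : b' + d' = a' * c') :
    (a = a' ∧ b = b') ∨ (c = c' ∧ d = d') := by
  have h : (a - a') * (c - c') = 0 := by linear_combination - h1 + h2 + h3 - h4
  rcases mul_eq_zero.1 h with h | h
  · left
    have := sub_eq_zero.1 h
    subst this
    exact ⟨rfl, by linear_combination h1 - h3⟩
  · right
    have := sub_eq_zero.1 h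
    subst this
    exact ⟨rfl, by linear_combination h1 - h2⟩

/-- counting bound -/
lemma side {p s : ℕ} (S : Finset (ZMod p)) {t : ℕ} (I : Finset (Fin t))
    (u v : {x // Valid p s S x}) (huv : (gr p s S).Adj u v)
    (g : Fin t → {x // Valid p s S x}) (hg : Function.Injective g)
    (hne : ∀ i ∈ I, g i ≠ v) (hu : ∀ i ∈ I, (gr p s S).Adj u (g i))
    (h1 : ∀ i ∈ I, (g i).1.1 = v.1.1) (h2 : ∀ i ∈ I, (g i).1.2.1 = v.1.2.1) :
    I.card ≤ s ∧ (v.1.1 ∉ S ∨ u.1.1 ∈ S → I.card + 1 ≤ s) := by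
  have inj : Set.InjOn (fun i => (g i).1.2.2) (I : Set (Fin t)) := by
    intro i hi j hj hij
    apply hg
    apply Subtype.ext
    refine Prod.ext ?_ (Prod.ext ?_ hij)
    · rw [h1 i hi, h1 j hj]
    · rw [h2 i hi, h2 j hj]
  have hl : ∀ i ∈ I, (g i).1.2.2 ≠ v.1.2.2 := by
    intro i hi h
    apply hne i hi
    apply Subtype.ext
    exact Prod.ext (h1 i hi) (Prod.ext (h2 i hi) h)
  have hc := Finset.card_image_of_injOn inj
  have b1 : insert v.1.2.2 (I.image (fun i => (g i).1.2.2)) ⊆ Finset.univ := Finset.subset_univ _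
  have nv : v.1.2.2 ∉ I.image (fun i => (g i).1.2.2) := by
    intro h
    obtain ⟨i, hi, h⟩ := Finset.mem_image.1 h
    exact hl i hi h
  have b2 := Finset.card_le_card b1
  rw [Finset.card_insert_of_notMem nv, hc, Finset.card_univ, Fintype.card_fin] at b2
  refine ⟨by omega, ?_⟩
  intro hor
  by_cases hv : v.1.1 ∈ S
  · have huS : u.1.1 ∈ S := by tauto
    have nu : u.1.2.2 ∉ insert v.1.2.2 (I.image (fun i => (g i).1.2.2)) := by
      intro h
      rcases Finset.mem_insert.1 h with h | h
      · exact huv.2.2 ⟨huS, hv, h⟩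
      · obtain ⟨i, hi, h⟩ := Finset.mem_image.1 h
        exact (hu i hi).2.2 ⟨huS, by rw [h1 i hi]; exact hv, h.symm⟩
    have b3 := Finset.card_le_card (Finset.subset_univ (insert u.1.2.2 (insert v.1.2.2 (I.image (fun i => (g i).1.2.2)))))
    rw [Finset.card_insert_of_notMem nu, Finset.card_insert_of_notMem nv, hc, Finset.card_univ, Fintype.card_fin] at b3
    omega
  · have nu : Fin.last s ∉ insert v.1.2.2 (I.image (fun i => (g i).1.2.2)) := by
      intro h
      rcases Finset.mem_insert.1 h with h | h
      · have := v.2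
        simp only [Valid, hv, or_false, ← h] at this
        simp at this
      · obtain ⟨i, hi, h⟩ := Finset.mem_image.1 h
        have := (g i).2
        simp only [Valid, h1 i hi, hv, or_false, h] at this
        simp at this
    have b3 := Finset.card_le_card (Finset.subset_univ (insert (Fin.last s) (insert v.1.2.2 (I.image (fun i => (g i).1.2.2)))))
    rw [Finset.card_insert_of_notMem nu, Finset.card_insert_of_notMem nv, hc, Finset.card_univ, Fintype.card_fin] at b3
    omega

lemma gr_free (p s : ℕ) [Fact p.Prime] (S : Finset (ZMod p)) :
    ¬ ContainsCopy (Bgraph (2 * s)) (gr p s S) := by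
  classical
  rintro ⟨f, hf, hadj⟩
  set u := f (0, Sum.inl 0) with hu
  set v := f (1, Sum.inl 0) with hv
  have huv : (gr p s S).Adj u v := hadj (by simp [Bgraph, boxProd_adj])
  have huu : ∀ i, (gr p s S).Adj u (f (0, Sum.inr i)) := fun i => hadj (by simp [Bgraph, boxProd_adj])
  have hvv : ∀ i, (gr p s S).Adj v (f (1, Sum.inr i)) := fun i => hadj (by simp [Bgraph, boxProd_adj])
  have hww : ∀ i, (gr p s S).Adj (f (0, Sum.inr i)) (f (1, Sum.inr i)) :=
    fun i => hadj (by simp [Bgraph, boxProd_adj])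
  let I : Finset (Fin (2 * s)) := Finset.univ.filter fun i =>
    (f (0, Sum.inr i)).1.1 = v.1.1 ∧ (f (0, Sum.inr i)).1.2.1 = v.1.2.1
  let J : Finset (Fin (2 * s)) := Finset.univ.filter fun i =>
    (f (1, Sum.inr i)).1.1 = u.1.1 ∧ (f (1, Sum.inr i)).1.2.1 = u.1.2.1
  have hIJ : I ∪ J = Finset.univ := by
    ext i
    simp only [I, J, Finset.mem_union, Finset.mem_filter, Finset.mem_univ, true_and, iff_true]
    have := c4 huv.2.1 (huu i).2.1 (hvv i).symm.2.1 (hww i).symm.2.1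
    rcases this with h | h
    · right; exact ⟨h.1.symm, h.2.symm⟩
    · left; exact ⟨h.1.symm, h.2.symm⟩
  have hc : 2 * s ≤ I.card + J.card := by
    have := Finset.card_union_le I J
    rw [hIJ, Finset.card_univ, Fintype.card_fin] at this
    exact this
  have key1 := side S I u v huv (fun i => f (0, Sum.inr i)) (fun i j h => by simpa using hf h)
    (fun i _ h => by simpa using hf h) (fun i _ => huu i)
    (fun i hi => (Finset.mem_filter.1 hi).2.1) (fun i hi => (Finset.mem_filter.1 hi).2.2)
  have key2 := side S J v u huv.symm (fun i => f (1, Sum.inr i)) (fun i j h => by simpa using hf h)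
    (fun i _ h => by simpa using hf h) (fun i _ => hvv i)
    (fun i hi => (Finset.mem_filter.1 hi).2.1) (fun i hi => (Finset.mem_filter.1 hi).2.2)
  by_cases h1 : u.1.1 ∈ S
  · have := key1.2 (Or.inr h1)
    have := key2.1
    omega
  · have := key2.2 (Or.inl h1)
    have := key1.1
    omega

lemma transfer {V : Type*} [Fintype V] (G : SimpleGraph V) (n s : ℕ)
    (hn : Fintype.card V ≤ n) (hG : ¬ ContainsCopy (Bgraph (2 * s)) G) :
    ∃ G' : SimpleGraph (Fin n), ¬ ContainsCopy (Bgraph (2 * s)) G' ∧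
      G'.edgeSet.ncard = G.edgeSet.ncard := by
  obtain ⟨e⟩ : Nonempty (V ↪ Fin n) := Function.Embedding.nonempty_of_card_le (by simpa using hn)
  refine ⟨G.map e, ?_, ?_⟩
  · rintro ⟨f, hf, hadj⟩
    apply hG
    have hr : ∀ a, ∃ x, e x = f a := by
      intro a
      have : ∃ b, (Bgraph (2 * s)).Adj a b := by
        obtain ⟨k, x⟩ := a
        exact ⟨(k + 1, x), by fin_cases k <;> simp [Bgraph, boxProd_adj]⟩
      obtain ⟨b, hb⟩ := this
      obtain ⟨x, y, _, h, _⟩ := (SimpleGraph.map_adj _ _ _ _).1 (hadj hb)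
      exact ⟨x, h⟩
    choose g hg using hr
    refine ⟨g, fun a b h => hf (by rw [← hg, ← hg, h]), fun a b hab => ?_⟩
    have := hadj hab
    rw [← hg, ← hg] at this
    simpa using this
  · rw [edgeSet_map]
    exact Set.ncard_image_of_injective _ e.sym2Map.injective

lemma card_valid (p s : ℕ) [Fact p.Prime] (S : Finset (ZMod p)) :
    Nat.card {x // Valid p s S x} ≤ p * p * s + p * S.card := by
  classical
  let A : Finset (ZMod p × ZMod p × Fin (s + 1)) :=
    (Finset.univ ×ˢ Finset.univ ×ˢ (Finset.univ.image Fin.castSucc)) ∪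
      (S ×ˢ Finset.univ ×ˢ {Fin.last s})
  have h : ∀ x, Valid p s S x → x ∈ A := by
    rintro ⟨a, b, i⟩ h
    simp only [A, Finset.mem_union, Finset.mem_product, Finset.mem_univ, true_and, Finset.mem_image,
      Finset.mem_singleton]
    rcases Fin.eq_castSucc_or_eq_last i with ⟨j, rfl⟩ | rfl
    · left; exact ⟨j, rfl⟩
    · right
      simpa [Valid] using h
  have h2 : Nat.card {x // Valid p s S x} ≤ Nat.card A :=
    Nat.card_le_card_of_injective (fun x => ⟨x.1, h x.1 x.2⟩) (fun x y hxy => Subtype.ext (by simpa using hxy))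
  refine h2.trans ?_
  rw [Nat.card_eq_fintype_card, Fintype.card_coe]
  refine (Finset.card_union_le _ _).trans ?_
  simp only [Finset.card_product, Finset.card_univ, ZMod.card, Finset.card_singleton]
  rw [Finset.card_image_of_injective _ (Fin.castSucc_injective s)]
  simp
  nlinarith

lemma pairs_card (s : ℕ) (P Q : Prop) [Decidable P] [Decidable Q] :
    s * s + s * ((if P then 1 else 0) + (if Q then 1 else 0)) ≤
    ((Finset.univ : Finset (Fin (s + 1) × Fin (s + 1))).filter
      (fun z => (z.1.val < s ∨ P) ∧ (z.2.val < s ∨ Q) ∧ ¬ (P ∧ Q ∧ z.1 = z.2))).card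
      + s * ((if P then 1 else 0) * (if Q then 1 else 0)) := by
  have c1 : ((Finset.univ : Finset (Fin (s + 1))).filter (fun z => z.val < s)).card = s := by
    have : (Finset.univ : Finset (Fin (s + 1))).filter (fun z => z.val < s) = Finset.Iio (Fin.last s) := by
      ext z; simp only [Finset.mem_filter, Finset.mem_univ, true_and, Finset.mem_Iio, Fin.lt_def, Fin.val_last]
    rw [this]; simp
  by_cases hP : P <;> by_cases hQ : Q
  · simp only [hP, hQ, or_true, true_and, if_true]
    have : ((Finset.univ : Finset (Fin (s + 1) × Fin (s + 1))).filter (fun z => ¬ z.1 = z.2)) =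
      (Finset.univ : Finset (Fin (s + 1))).offDiag := by
      ext z; simp
    rw [this, Finset.offDiag_card]
    simp
    have : (s + 1) * (s + 1) - (s + 1) = s * s + s := by
      rw [Nat.sub_eq_iff_eq_add (by nlinarith)]; ring
    rw [this]; nlinarith
  · simp only [hP, hQ, or_true, or_false, true_and, false_and, and_false, not_false_iff, and_true, if_true, if_false]
    have : ((Finset.univ : Finset (Fin (s + 1) × Fin (s + 1))).filter (fun z => z.2.val < s)) =
      Finset.univ ×ˢ (Finset.univ.filter (fun z : Fin (s+1) => z.val < s)) := by
      ext z; simp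
    rw [this, Finset.card_product, c1]; simp <;> nlinarith
  · simp only [hP, hQ, or_true, or_false, true_and, false_and, and_false, not_false_iff, and_true, if_true, if_false]
    have : ((Finset.univ : Finset (Fin (s + 1) × Fin (s + 1))).filter (fun z => z.1.val < s)) =
      (Finset.univ.filter (fun z : Fin (s+1) => z.val < s)) ×ˢ Finset.univ := by
      ext z; simp
    rw [this, Finset.card_product, c1]; simp <;> nlinarith
  · simp only [hP, hQ, or_false, false_and, not_false_iff, and_true, if_false]
    have : ((Finset.univ : Finset (Fin (s + 1) × Fin (s + 1))).filter (fun z => z.1.val < s ∧ z.2.val < s)) =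
      (Finset.univ.filter (fun z : Fin (s+1) => z.val < s)) ×ˢ (Finset.univ.filter (fun z : Fin (s+1) => z.val < s)) := by
      ext z; simp
    rw [this, Finset.card_product, c1]

lemma edges (p s : ℕ) [Fact p.Prime] (S : Finset (ZMod p)) :
    p * (p * p * (s * s) + 2 * s * S.card * p) ≤
      2 * (gr p s S).edgeSet.ncard + p * (s * S.card * S.card) + p * p * (s * s + 2 * s) := by
  classical
  have e1 : (gr p s S).edgeSet.ncard = (gr p s S).edgeFinset.card := by
    rw [Set.ncard_eq_toFinset_card']; rfl
  rw [e1, ← dart_card_eq_twice_card_edges]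
  let W : ZMod p → ZMod p → Finset (Fin (s + 1) × Fin (s + 1)) := fun a c =>
    Finset.univ.filter (fun z => (z.1.val < s ∨ a ∈ S) ∧ (z.2.val < s ∨ c ∈ S) ∧ ¬ (a ∈ S ∧ c ∈ S ∧ z.1 = z.2))
  let D : Finset (Σ _ : (ZMod p × ZMod p) × ZMod p, Fin (s + 1) × Fin (s + 1)) :=
    (((Finset.univ : Finset (ZMod p × ZMod p)).filter (fun z => z.1 ≠ z.2)) ×ˢ Finset.univ).sigma
      (fun z => W z.1.1 z.1.2)
  have hD : D.card ≤ Fintype.card (gr p s S).Dart := by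
    rw [← Fintype.card_coe]
    refine Fintype.card_le_of_injective (fun z => ⟨(⟨(z.1.1.1.1, z.1.1.2, z.1.2.1), ?_⟩,
      ⟨(z.1.1.1.2, z.1.1.1.1 * z.1.1.1.2 - z.1.1.2, z.1.2.2), ?_⟩), ?_⟩) ?_
    · have := z.2
      simp only [D, W, Finset.mem_sigma, Finset.mem_filter] at this
      exact this.2.2.1
    · have := z.2
      simp only [D, W, Finset.mem_sigma, Finset.mem_filter] at this
      exact this.2.2.2.1
    · have := z.2
      simp only [D, W, Finset.mem_sigma, Finset.mem_filter, Finset.mem_product] at this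
      exact ⟨this.1.1.2, by simp, this.2.2.2.2⟩
    · rintro ⟨⟨⟨⟨a, c⟩, b⟩, ⟨i, j⟩⟩, hz⟩ ⟨⟨⟨⟨a', c'⟩, b'⟩, ⟨i', j'⟩⟩, hz'⟩ h
      simp only [Dart.mk.injEq, Prod.mk.injEq, Subtype.mk.injEq] at h
      obtain ⟨⟨rfl, rfl, rfl⟩, rfl, _, rfl⟩ := h
      rfl
  have hD2 : D.card = p * ∑ z : ZMod p × ZMod p with z.1 ≠ z.2, (W z.1 z.2).card := by
    simp only [D, Finset.card_sigma, Finset.sum_product, Finset.sum_const, Finset.card_univ, ZMod.card,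
      smul_eq_mul, Finset.mul_sum]
  let χ : ZMod p → ℕ := fun a => if a ∈ S then 1 else 0
  have hχ : ∑ a, χ a = S.card := by simp [χ]
  have hW : ∀ a c, s * s + s * (χ a + χ c) ≤ (W a c).card + s * (χ a * χ c) := fun a c => pairs_card s _ _
  have hχ1 : ∀ a, χ a ≤ 1 := fun a => by simp only [χ]; split_ifs <;> simp
  have hsum : ∑ z : ZMod p × ZMod p, (s * s + s * (χ z.1 + χ z.2)) ≤
      ∑ z : ZMod p × ZMod p, (s * (χ z.1 * χ z.2)) + (∑ z : ZMod p × ZMod p with z.1 ≠ z.2, (W z.1 z.2).card) +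
        p * (s * s + 2 * s) := by
    have : ∑ z : ZMod p × ZMod p, (s * s + s * (χ z.1 + χ z.2)) ≤
      ∑ z : ZMod p × ZMod p, ((s * (χ z.1 * χ z.2)) + (if z.1 ≠ z.2 then (W z.1 z.2).card else 0) +
        (if z.1 = z.2 then (s * s + 2 * s) else 0)) := by
      apply Finset.sum_le_sum
      intro z _
      by_cases h : z.1 = z.2
      · simp only [h, ne_eq, not_true, if_false, if_true]
        have := hχ1 z.2
        nlinarith
      · simp only [ne_eq, h, not_false_iff, if_true, if_false]
        have := hW z.1 z.2
        omega
    refine this.trans (le_of_eq ?_)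
    rw [Finset.sum_add_distrib, Finset.sum_add_distrib, Finset.sum_filter]
    congr 1
    rw [Fintype.sum_prod_type]
    simp
  have hl : ∑ z : ZMod p × ZMod p, (s * s + s * (χ z.1 + χ z.2)) = p * p * (s * s) + 2 * s * S.card * p := by
    rw [Fintype.sum_prod_type]
    simp only [Finset.sum_add_distrib, ← Finset.mul_sum, hχ, Finset.sum_const, Finset.card_univ, ZMod.card, smul_eq_mul]
    ring
  have hr : ∑ z : ZMod p × ZMod p, (s * (χ z.1 * χ z.2)) = s * S.card * S.card := by
    rw [Fintype.sum_prod_type]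
    simp only [← Finset.mul_sum, hχ, ← Finset.sum_mul]
    ring
  rw [hl, hr] at hsum
  have := Nat.mul_le_mul_left p hsum
  rw [mul_add p (_ + _) _, mul_add p (s * _ * _) _, ← hD2] at this
  nlinarith

set_option maxHeartbeats 4000000 in
theorem main_bound (s : ℕ) (hs : 1 ≤ s) (ε : ℝ) (hε : 0 < ε) :
    ∃ N : ℕ, ∀ n : ℕ, N ≤ n → ∃ G : SimpleGraph (Fin n),
      ¬ ContainsCopy (Bgraph (2 * s)) G ∧
      (2 * (s : ℝ) * ((s : ℝ) + 1) * (Real.sqrt (4 * (s : ℝ) ^ 2 + 5 * s + 1) - 2 * s - 1)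
          / (Real.sqrt (4 * (s : ℝ) ^ 2 + 5 * s + 1) - s - 1) ^ (3/2 : ℝ) - ε)
          * (n : ℝ) ^ (3/2 : ℝ)
        ≤ (G.edgeSet.ncard : ℝ) := by
  have hs' : (1 : ℝ) ≤ s := by exact_mod_cast hs
  obtain ⟨β, hβ⟩ : ∃ β : ℝ, β = Real.sqrt (4 * (s : ℝ) ^ 2 + 5 * s + 1) - 2 * s - 1 := ⟨_, rfl⟩
  have hx : Real.sqrt (4 * (s : ℝ) ^ 2 + 5 * s + 1) - s - 1 = s + β := by rw [hβ]; ring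
  rw [hx, ← hβ]
  have hsq : (β + 2 * s + 1) ^ 2 = 4 * (s : ℝ) ^ 2 + 5 * s + 1 := by
    have := Real.sq_sqrt (show (0 : ℝ) ≤ 4 * (s : ℝ) ^ 2 + 5 * s + 1 by positivity)
    rw [hβ]; linear_combination this
  have hβ0 : 0 < β := by
    have : 2 * (s : ℝ) + 1 < Real.sqrt (4 * (s : ℝ) ^ 2 + 5 * s + 1) := by
      apply Real.lt_sqrt_of_sq_lt; nlinarith
    rw [hβ]; linarith
  have hβ1 : β ≤ 1 := by nlinarith
  have hq : (s : ℝ) * (s + 2 * β - β ^ 2) = 4 * s * (s + 1) * β := by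
    linear_combination (-(s : ℝ)) * hsq
  clear hx hsq hβ
  obtain ⟨c, hc⟩ : ∃ c : ℝ, c = 2 * (s : ℝ) * (s + 1) * β := ⟨_, rfl⟩
  rw [← hc]
  have hc0 : 0 < c := by rw [hc]; positivity
  obtain ⟨K, hK⟩ : ∃ K : ℝ, K = (s : ℝ) + β := ⟨_, rfl⟩
  rw [← hK]
  have hK0 : 0 < K := by rw [hK]; positivity
  obtain ⟨κ, hκ⟩ : ∃ κ : ℝ, κ = K ^ (3 / 2 : ℝ) := ⟨_, rfl⟩
  rw [← hκ]
  have hκ0 : 0 < κ := by rw [hκ]; positivity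
  set δ := min (1 / 2) (ε * κ / (6 * c)) with hδ
  have hδ0 : 0 < δ := by positivity
  have hδ1 : δ ≤ 1 / 2 := min_le_left _ _
  have hδ2 : 3 * δ * c ≤ ε * κ / 2 := by
    have : δ ≤ ε * κ / (6 * c) := min_le_right _ _
    rw [le_div_iff₀ (by positivity)] at this
    linarith
  obtain ⟨X₀, hX₀⟩ := B2s.exists_prime_near δ hδ0
  set C : ℝ := (s : ℝ) * s + 2 * s with hC
  have hC0 : 0 < C := by positivity
  set X₁ : ℝ := max 1 (max X₀ (4 * C / (ε * κ))) with hX₁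
  refine ⟨⌈K * X₁ ^ 2⌉₊, fun n hn => ?_⟩
  have hn' : K * X₁ ^ 2 ≤ n := Nat.ceil_le.1 hn
  set X : ℝ := Real.sqrt (n / K) with hX
  have hXX : X₁ ≤ X := by
    apply Real.le_sqrt_of_sq_le
    rw [le_div_iff₀ hK0]; linarith
  have hX1 : 1 ≤ X := (le_max_left _ _).trans hXX
  have hX0 : X₀ ≤ X := ((le_max_left _ _).trans (le_max_right _ _)).trans hXX
  have hX2 : 4 * C / (ε * κ) ≤ X := ((le_max_right _ _).trans (le_max_right _ _)).trans hXX
  have hXsq : K * X ^ 2 = n := by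
    rw [hX, Real.sq_sqrt (by positivity)]; field_simp
  have hn32 : (n : ℝ) ^ (3 / 2 : ℝ) = κ * X ^ 3 := by
    rw [← hXsq, Real.mul_rpow hK0.le (by positivity), hκ, ← Real.rpow_natCast X 2, ← Real.rpow_mul (by positivity),
      ← Real.rpow_natCast X 3]
    norm_num
  obtain ⟨p, hp, hp1, hp2⟩ := hX₀ X hX0
  have : Fact p.Prime := ⟨hp⟩
  obtain ⟨S, -, hS⟩ := Finset.exists_subset_card_eq (s := (Finset.univ : Finset (ZMod p))) (n := ⌊β * p⌋₊) (by
    rw [Finset.card_univ, ZMod.card]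
    apply Nat.floor_le_of_le
    have : (0 : ℝ) ≤ p := by positivity
    nlinarith)
  have hm1 : (S.card : ℝ) ≤ β * p := by rw [hS]; exact Nat.floor_le (by positivity)
  have hm2 : β * p - 1 ≤ (S.card : ℝ) := by rw [hS]; exact (Nat.sub_one_lt_floor _).le
  have hp0 : (0 : ℝ) ≤ p := by positivity
  have hcard := B2s.card_valid p s S
  classical
  have : Fintype {x // B2s.Valid p s S x} := Fintype.ofFinite _
  obtain ⟨G, hG1, hG2⟩ := B2s.transfer (B2s.gr p s S) n s (by
    rw [← Nat.card_eq_fintype_card]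
    refine hcard.trans ?_
    have : (p : ℝ) * p * s + p * S.card ≤ n := by
      rw [← hXsq]
      calc (p : ℝ) * p * s + p * S.card ≤ p * p * s + p * (β * p) := by gcongr
        _ = K * p ^ 2 := by rw [hK]; ring
        _ ≤ K * X ^ 2 := by gcongr
    exact_mod_cast this) (B2s.gr_free p s S)
  refine ⟨G, hG1, ?_⟩
  rw [hG2, hn32]
  have hE := B2s.edges p s S
  have hE' : (p : ℝ) * (p * p * (s * s) + 2 * s * S.card * p) ≤
      2 * ((B2s.gr p s S).edgeSet.ncard : ℝ) + p * (s * S.card * S.card) + p * p * (s * s + 2 * s) := by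
    exact_mod_cast hE
  set m : ℝ := (S.card : ℝ)
  have hm0 : (0 : ℝ) ≤ m := by positivity
  set e : ℝ := ((B2s.gr p s S).edgeSet.ncard : ℝ)
  have e1 : (p : ℝ) * (2 * s * (β * p - 1) * p) ≤ p * (2 * s * m * p) := by gcongr
  have e2 : (p : ℝ) * (s * m * m) ≤ p * (s * (β * p) * (β * p)) := by gcongr
  have e3 : (p : ℝ) ^ 3 * (2 * c) ≤ 2 * e + 2 * s * p ^ 2 + C * p ^ 2 := by
    have : (p : ℝ) ^ 3 * (2 * c) = p ^ 3 * (s * (s + 2 * β - β ^ 2)) := by rw [hq, hc]; ring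
    rw [this, hC]
    linarith
  have e4 : c * p ^ 3 - C * p ^ 2 ≤ e := by
    have : 2 * (s : ℝ) * p ^ 2 ≤ C * p ^ 2 := by
      apply mul_le_mul_of_nonneg_right _ (by positivity); rw [hC]; linarith [mul_self_nonneg (s : ℝ)]
    linarith
  have e5 : (1 - 3 * δ) * X ^ 3 ≤ (p : ℝ) ^ 3 := by
    have h1 : ((1 - δ) * X) ^ 3 ≤ (p : ℝ) ^ 3 := by
      apply pow_le_pow_left₀ _ hp1
      apply mul_nonneg <;> linarith
    refine le_trans ?_ h1
    rw [mul_pow]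
    apply mul_le_mul_of_nonneg_right _ (by positivity)
    nlinarith [mul_nonneg hδ0.le hδ0.le]
  have e6 : C * (p : ℝ) ^ 2 ≤ C * X ^ 2 := by gcongr
  have e7 : C * X ^ 2 ≤ ε * κ / 4 * X ^ 3 := by
    rw [div_le_iff₀ (by positivity)] at hX2
    have : C ≤ ε * κ / 4 * X := by linarith
    calc C * X ^ 2 ≤ (ε * κ / 4 * X) * X ^ 2 := by gcongr
      _ = _ := by ring
  have e8 : 3 * δ * c * X ^ 3 ≤ ε * κ / 2 * X ^ 3 := by gcongr
  have e9 : c * ((1 - 3 * δ) * X ^ 3) ≤ c * p ^ 3 := by gcongr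
  have e10 : (c / κ - ε) * (κ * X ^ 3) = c * X ^ 3 - ε * κ * X ^ 3 := by field_simp
  rw [e10]
  have : 0 ≤ ε * κ * X ^ 3 := by positivity
  linarith

end B2s

theorem ex_B2s_lower (s : ℕ) (hs : 1 ≤ s) (ε : ℝ) (hε : 0 < ε) :
    ∃ N : ℕ, ∀ n : ℕ, N ≤ n → ∃ G : SimpleGraph (Fin n),
      ¬ ContainsCopy (Bgraph (2 * s)) G ∧
      (2 * (s : ℝ) * ((s : ℝ) + 1) * (Real.sqrt (4 * (s : ℝ) ^ 2 + 5 * s + 1) - 2 * s - 1)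
          / (Real.sqrt (4 * (s : ℝ) ^ 2 + 5 * s + 1) - s - 1) ^ (3/2 : ℝ) - ε)
          * (n : ℝ) ^ (3/2 : ℝ)
        ≤ (G.edgeSet.ncard : ℝ) :=
  B2s.main_bound s hs ε hε
end

section
/- For every ε > 0 there exists N such that for all n ≥ N, every graph G on n vertices that contains no subgraph isomorphic to B_2 satisfies e(G) ≤ (2/√11 + ε)·n^{3/2}. (That is, ex(n, B_2) ≤ (2/√11)(1+o(1))·n^{3/2}.) -/
open SimpleGraph

namespace B2

open Finset

/-- The configuration form of `B_2`-freeness. -/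
def Free {V : Type*} (G : SimpleGraph V) : Prop :=
  ∀ v z p q p' q' : V, G.Adj v z → G.Adj v p → G.Adj z q → G.Adj p q →
    G.Adj v p' → G.Adj z q' → G.Adj p' q' → p ≠ z → q ≠ v → p' ≠ z → q' ≠ v →
    p ≠ p' → p ≠ q' → q ≠ p' → q ≠ q' → False

lemma free_of_not_contains {V : Type*} (G : SimpleGraph V)
    (h : ¬ ContainsCopy (Bgraph 2) G) : Free G := by
  intro v z p q p' q' hvz hvp hzq hpq hvp' hzq' hpq' h1 h2 h3 h4 h5 h6 h7 h8
  apply h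
  refine ⟨fun x => match x with
    | (0, Sum.inl _) => v
    | (1, Sum.inl _) => z
    | (0, Sum.inr 0) => p
    | (1, Sum.inr 0) => q
    | (0, Sum.inr 1) => p'
    | (1, Sum.inr 1) => q', ?_, ?_⟩
  · have a1 := hvz.ne
    have a2 := hvp.ne
    have a3 := hzq.ne
    have a4 := hpq.ne
    have a5 := hvp'.ne
    have a6 := hzq'.ne
    have a7 := hpq'.ne
    rintro ⟨i, x⟩ ⟨j, y⟩ hxy
    fin_cases i <;> fin_cases j <;> rcases x with x | x <;> rcases y with y | y <;>
      fin_cases x <;> fin_cases y <;> simp_all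
  · rintro ⟨i, x⟩ ⟨j, y⟩ hxy
    simp only [Bgraph, SimpleGraph.boxProd_adj, SimpleGraph.top_adj] at hxy
    fin_cases i <;> fin_cases j <;> rcases x with x | x <;> rcases y with y | y <;>
      fin_cases x <;> fin_cases y <;> simp_all [SimpleGraph.adj_comm]

section
variable {V : Type*} [Fintype V] [DecidableEq V] (G : SimpleGraph V) [DecidableRel G.Adj]

/-- common neighbours -/
def com (z p : V) : Finset V := univ.filter (fun w => G.Adj w z ∧ G.Adj w p)

/-- neighbours of `v` -/
def nb (v : V) : Finset V := univ.filter (fun w => G.Adj v w)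

lemma mem_com {z p w : V} : w ∈ com G z p ↔ G.Adj w z ∧ G.Adj w p := by simp [com]
lemma mem_nb {v w : V} : w ∈ nb G v ↔ G.Adj v w := by simp [nb]

lemma com_comm (z p : V) : com G z p = com G p z := by
  ext w; simp [com, and_comm]

/-- degree set of `z` in the auxiliary graph at `v` -/
def hn (v z : V) : Finset V := (nb G v).filter (fun p => z ≠ p ∧ 2 ≤ (com G z p).card)

/-- out-neighbours of `v` -/
def out (K : ℕ) (v : V) : Finset V := (nb G v).filter (fun z => K ≤ (hn G v z).card)

lemma dc (R : V → V → Prop) [∀ a b, Decidable (R a b)] :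
    ∑ z, ∑ p, (if R z p then (com G z p).card else 0)
      = ∑ v, ∑ z ∈ nb G v, ((nb G v).filter (fun p => R z p)).card := by
  have h1 : ∀ z p, (if R z p then (com G z p).card else 0)
      = ∑ v, if (G.Adj v z ∧ G.Adj v p ∧ R z p) then 1 else 0 := by
    intro z p
    by_cases h : R z p
    · simp [h, com]
    · simp [h]
  have h2 : ∀ v, ∑ z ∈ nb G v, ((nb G v).filter (fun p => R z p)).card
      = ∑ z, ∑ p, if (G.Adj v z ∧ G.Adj v p ∧ R z p) then 1 else 0 := by
    intro v
    rw [nb, sum_filter]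
    refine sum_congr rfl fun z _ => ?_
    by_cases h : G.Adj v z
    · simp [h, filter_filter]
    · simp [h]
  simp_rw [h1, h2]
  rw [sum_comm' (t' := univ) (s' := fun _ => univ) (by simp)]
  rw [sum_comm]
  rw [sum_comm]
  rw [sum_comm]
  conv_rhs => rw [sum_comm]
  refine sum_congr rfl fun z _ => ?_
  first
  | rw [sum_comm]
  | skip

variable {G}

/-- At most three `p` in `N(v)` have codegree at least three with `z`. -/
lemma card_three (hB : Free G) (v z : V) (hvz : G.Adj v z) :
    ((nb G v).filter (fun p => z ≠ p ∧ 3 ≤ (com G z p).card)).card ≤ 3 := by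
  by_contra hcon
  push Not at hcon
  set S := (nb G v).filter (fun p => z ≠ p ∧ 3 ≤ (com G z p).card) with hS
  have hprop : ∀ p ∈ S, G.Adj v p ∧ p ≠ z ∧ ∃ q1 q2, q1 ≠ q2 ∧ q1 ≠ v ∧ q2 ≠ v ∧
      G.Adj z q1 ∧ G.Adj p q1 ∧ G.Adj z q2 ∧ G.Adj p q2 := by
    intro p hp
    rw [hS, mem_filter, mem_nb] at hp
    obtain ⟨h1, h2, h3⟩ := hp
    refine ⟨h1, h2.symm, ?_⟩
    have h4 : 1 < ((com G z p).erase v).card := by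
      have := pred_card_le_card_erase (s := com G z p) (a := v)
      omega
    obtain ⟨q1, hq1, q2, hq2, hne⟩ := one_lt_card.1 h4
    rw [mem_erase, mem_com] at hq1 hq2
    exact ⟨q1, q2, hne, hq1.1, hq2.1, hq1.2.1.symm, hq1.2.2.symm, hq2.2.1.symm, hq2.2.2.symm⟩
  have hne : S.Nonempty := card_pos.1 (by omega)
  obtain ⟨p, hp⟩ := hne
  obtain ⟨hvp, hpz, q1, q2, hq, hq1v, hq2v, hzq1, hpq1, hzq2, hpq2⟩ := hprop p hp
  have hsub : S ⊆ {p, q1, q2} := by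
    intro p' hp'
    by_contra hn
    simp only [mem_insert, mem_singleton, not_or] at hn
    obtain ⟨n1, n2, n3⟩ := hn
    obtain ⟨hvp', hpz', r1, r2, hr, hr1v, hr2v, hzr1, hpr1, hzr2, hpr2⟩ := hprop p' hp'
    have key : ∀ q r, q ≠ v → G.Adj z q → G.Adj p q → p' ≠ q → r ≠ v → G.Adj z r →
        G.Adj p' r → p = r ∨ q = r := by
      intro q r a1 a2 a3 a4 a5 a6 a7
      by_contra hc
      push Not at hc
      exact hB v z p q p' r hvz hvp a2 a3 hvp' a6 a7 hpz a1 hpz' a5 (Ne.symm n1) hc.1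
        (Ne.symm a4) hc.2
    have k1 := key q1 r1 hq1v hzq1 hpq1 n2 hr1v hzr1 hpr1
    have k2 := key q1 r2 hq1v hzq1 hpq1 n2 hr2v hzr2 hpr2
    have k3 := key q2 r1 hq2v hzq2 hpq2 n3 hr1v hzr1 hpr1
    have k4 := key q2 r2 hq2v hzq2 hpq2 n3 hr2v hzr2 hpr2
    grind
  have := card_le_card hsub
  have := card_le_three (a := p) (b := q1) (c := q2)
  omega

/-- intersecting families of pairs with many first coordinates are stars -/
lemma star (F : V → V → Prop)
    (hI : ∀ p q p' q', F p q → F p' q' → p = p' ∨ p = q' ∨ q = p' ∨ q = q')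
    (P : Finset V) (hP : 4 ≤ P.card) (hPF : ∀ p ∈ P, ∃ q, F p q) :
    ∃ c, ∀ p q, F p q → p = c ∨ q = c := by
  by_contra hcon
  push Not at hcon
  obtain ⟨p0, hp0⟩ : P.Nonempty := card_pos.1 (by omega)
  obtain ⟨q0, h0⟩ := hPF p0 hp0
  obtain ⟨a, b, hab, ha, hb⟩ := hcon p0
  obtain ⟨c, d, hcd, hc, hd⟩ := hcon q0
  have hsub : ∃ x, P ⊆ {p0, q0, x} := by
    have i1 := hI _ _ _ _ h0 hab
    have i2 := hI _ _ _ _ h0 hcd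
    have i3 := hI _ _ _ _ hab hcd
    by_cases haq : a = q0
    · refine ⟨b, fun p hp => ?_⟩
      obtain ⟨q, hq⟩ := hPF p hp
      have j1 := hI _ _ _ _ h0 hq
      have j2 := hI _ _ _ _ hab hq
      have j3 := hI _ _ _ _ hcd hq
      simp only [mem_insert, mem_singleton]
      grind
    · refine ⟨a, fun p hp => ?_⟩
      obtain ⟨q, hq⟩ := hPF p hp
      have j1 := hI _ _ _ _ h0 hq
      have j2 := hI _ _ _ _ hab hq
      have j3 := hI _ _ _ _ hcd hq
      simp only [mem_insert, mem_singleton]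
      grind
  obtain ⟨x, hx⟩ := hsub
  have := card_le_card hx
  have := card_le_three (a := p0) (b := q0) (c := x)
  omega

variable (G) in
/-- neighbours of `c` with large codegree with `c` -/
def W (K : ℕ) (c : V) : Finset V := (nb G c).filter (fun v => K ≤ (com G v c).card)

lemma hn_ex {v z p : V} (hp : p ∈ hn G v z) :
    G.Adj v p ∧ p ≠ z ∧ ∃ q, q ≠ v ∧ G.Adj z q ∧ G.Adj p q := by
  rw [hn, mem_filter, mem_nb] at hp
  obtain ⟨h1, h2, h3⟩ := hp
  refine ⟨h1, h2.symm, ?_⟩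
  obtain ⟨q, hq, hne⟩ := exists_mem_ne (s := com G z p) (by omega) v
  rw [mem_com] at hq
  exact ⟨q, hne, hq.1.symm, hq.2.symm⟩

lemma bi_center (hB : Free G) (K : ℕ) (hK : 4 ≤ K) (v z : V)
    (h1 : z ∈ out G (K + 1) v) (h2 : v ∈ out G (K + 1) z) :
    ∃ c, v ∈ W G K c ∧ z ∈ W G K c := by
  rw [out, mem_filter, mem_nb] at h1 h2
  obtain ⟨hvz, h1⟩ := h1
  obtain ⟨-, h2⟩ := h2
  let F : V → V → Prop := fun p q => G.Adj v p ∧ G.Adj z q ∧ G.Adj p q ∧ p ≠ z ∧ q ≠ v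
  have hF1 : ∀ p ∈ hn G v z, ∃ q, F p q := by
    intro p hp
    obtain ⟨a, b, q, c, d, e⟩ := hn_ex hp
    exact ⟨q, a, d, e, b, c⟩
  have hF2 : ∀ q ∈ hn G z v, ∃ p, F p q := by
    intro p hp
    obtain ⟨a, b, q, c, d, e⟩ := hn_ex hp
    exact ⟨q, d, a, e.symm, c, b⟩
  obtain ⟨c, hc⟩ := star F (by
    rintro p q p' q' ⟨a1, a2, a3, a4, a5⟩ ⟨b1, b2, b3, b4, b5⟩
    by_contra hcon
    push Not at hcon
    exact hB v z p q p' q' hvz a1 a2 a3 b1 b2 b3 a4 a5 b4 b5 hcon.1 hcon.2.1 hcon.2.2.1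
      hcon.2.2.2) (hn G v z) (by omega) hF1
  have c1 : K ≤ ((hn G v z).erase c).card := by
    have := pred_card_le_card_erase (s := hn G v z) (a := c)
    omega
  have c2 : K ≤ ((hn G z v).erase c).card := by
    have := pred_card_le_card_erase (s := hn G z v) (a := c)
    omega
  have f1 : ∀ p ∈ (hn G v z).erase c, F p c := by
    intro p hp
    rw [mem_erase] at hp
    obtain ⟨q, hq⟩ := hF1 p hp.2
    rcases hc p q hq with h | h
    · exact absurd h hp.1
    · exact h ▸ hq
  have f2 : ∀ q ∈ (hn G z v).erase c, F c q := by
    intro p hp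
    rw [mem_erase] at hp
    obtain ⟨q, hq⟩ := hF2 p hp.2
    rcases hc q p hq with h | h
    · exact h ▸ hq
    · exact absurd h hp.1
  obtain ⟨p, hp⟩ : ((hn G v z).erase c).Nonempty := card_pos.1 (by omega)
  obtain ⟨q, hq⟩ : ((hn G z v).erase c).Nonempty := card_pos.1 (by omega)
  refine ⟨c, ?_, ?_⟩
  · rw [W, mem_filter, mem_nb]
    refine ⟨(f2 q hq).1.symm, c1.trans (card_le_card fun x hx => ?_)⟩
    rw [mem_com]
    exact ⟨(f1 x hx).1.symm, (f1 x hx).2.2.1⟩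
  · rw [W, mem_filter, mem_nb]
    refine ⟨(f1 p hp).2.1.symm, c2.trans (card_le_card fun x hx => ?_)⟩
    rw [mem_com]
    exact ⟨(f2 x hx).2.1.symm, (f2 x hx).2.2.1.symm⟩

/-- two members of `W` have no common neighbour inside `N(c)` -/
lemma W_disj (hB : Free G) (K : ℕ) (hK : 4 ≤ K) (c v v' p : V) (hv : v ∈ W G K c)
    (hv' : v' ∈ W G K c) (hne : v ≠ v') (hcp : G.Adj c p) (hvp : G.Adj v p)
    (hvp' : G.Adj v' p) : False := by
  rw [W, mem_filter, mem_nb] at hv hv'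
  obtain ⟨hcv, hv⟩ := hv
  obtain ⟨hcv', hv'⟩ := hv'
  have e1 : (({p, v'} : Finset V)).card < (com G v c).card :=
    lt_of_le_of_lt card_le_two (by omega)
  obtain ⟨y, hy, hy'⟩ := exists_mem_notMem_of_card_lt_card e1
  have e2 : (({p, v, y} : Finset V)).card < (com G v' c).card :=
    lt_of_le_of_lt card_le_three (by omega)
  obtain ⟨y', hy1, hy1'⟩ := exists_mem_notMem_of_card_lt_card e2
  simp only [mem_insert, mem_singleton, not_or] at hy' hy1'
  rw [mem_com] at hy hy1
  exact hB c p y v y' v' hcp hy.2.symm hvp.symm hy.1 hy1.2.symm hvp'.symm hy1.1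
    hy'.1 hcv.ne' hy1'.1 hcv'.ne' (Ne.symm hy1'.2.2) hy'.2 (Ne.symm hy1'.2.1) hne

lemma W_card (hB : Free G) (K : ℕ) (hK : 4 ≤ K) (c : V) :
    K * (W G K c).card ≤ (nb G c).card := by
  have h1 : ((W G K c).biUnion (fun v => com G v c)).card
      = ∑ v ∈ W G K c, (com G v c).card := by
    apply card_biUnion
    intro v hv v' hv' hne
    rw [Function.onFun, Finset.disjoint_left]
    intro p hp hp'
    rw [mem_com] at hp hp'
    exact W_disj hB K hK c v v' p hv hv' hne hp.2.symm hp.1.symm hp'.1.symm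
  have h2 : ((W G K c).biUnion (fun v => com G v c)) ⊆ nb G c := by
    intro p hp
    rw [mem_biUnion] at hp
    obtain ⟨v, _, hp⟩ := hp
    rw [mem_com] at hp
    exact (mem_nb G).2 hp.2.symm
  have h3 : (W G K c).card * K ≤ ∑ v ∈ W G K c, (com G v c).card := by
    rw [← smul_eq_mul]
    apply card_nsmul_le_sum
    intro v hv
    exact (mem_filter.1 hv).2
  have := card_le_card h2
  rw [mul_comm]
  omega

variable (G) in
/-- bi-oriented pairs -/
def bi (K : ℕ) : Finset (V × V) :=
  univ.filter (fun x => x.2 ∈ out G K x.1 ∧ x.1 ∈ out G K x.2)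

lemma bi_card (hB : Free G) (K : ℕ) (hK : 4 ≤ K) :
    K * (bi G (K + 1)).card ≤ ∑ v, (nb G v).card := by
  have h0 : ∀ x : V × V, ∃ c, x ∈ bi G (K + 1) → x.1 ∈ W G K c ∧ x.2 ∈ W G K c := by
    intro x
    by_cases hx : x ∈ bi G (K + 1)
    · have hx' := hx
      rw [bi, mem_filter] at hx'
      obtain ⟨c, hc⟩ := bi_center hB K hK x.1 x.2 hx'.2.1 hx'.2.2
      exact ⟨c, fun _ => hc⟩
    · exact ⟨x.1, fun h => absurd h hx⟩
  choose f hf using h0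
  have h1 : (bi G (K + 1)).card ≤ (univ.sigma (fun c : V => W G K c)).card := by
    apply card_le_card_of_injOn (fun x => (⟨f x, x.1⟩ : Σ _ : V, V))
    · intro x hx
      simp only [coe_sigma, Set.mem_sigma_iff, mem_coe, mem_univ, true_and]
      exact (hf x hx).1
    · rintro ⟨v, z⟩ hx ⟨v', z'⟩ hx' heq
      simp only [Sigma.mk.injEq, heq_eq_eq] at heq
      obtain ⟨e1, e2⟩ := heq
      subst e2
      have a1 := hf _ hx
      have a2 := hf _ hx'
      rw [← e1] at a2
      by_contra hne
      have hzz : z ≠ z' := fun h => hne (by rw [h])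
      have b1 := (mem_filter.1 hx).2.1
      have b2 := (mem_filter.1 hx').2.1
      have b1 := (mem_nb G).1 (mem_filter.1 b1).1
      have b2 := (mem_nb G).1 (mem_filter.1 b2).1
      have b3 := (mem_nb G).1 (mem_filter.1 a1.1).1
      exact W_disj hB K hK _ z z' v a1.2 a2.2 hzz b3 b1.symm b2.symm
  rw [card_sigma] at h1
  calc K * (bi G (K + 1)).card ≤ K * ∑ c, (W G K c).card := Nat.mul_le_mul_left _ h1
    _ = ∑ c, K * (W G K c).card := mul_sum _ _ _
    _ ≤ _ := sum_le_sum fun c _ => W_card hB K hK c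

/-- out-degree sum -/
lemma out_sum (K : ℕ) :
    2 * ∑ v, (out G K v).card ≤ ∑ v, (nb G v).card + (bi G K).card := by
  set A : Finset (V × V) := univ.filter (fun x => x.2 ∈ out G K x.1) with hA
  set B : Finset (V × V) := univ.filter (fun x => x.1 ∈ out G K x.2) with hBd
  set E : Finset (V × V) := univ.filter (fun x => x.2 ∈ nb G x.1) with hE
  have cnt : ∀ S : V → Finset V,
      (univ.filter (fun x : V × V => x.2 ∈ S x.1)).card = ∑ v, (S v).card := by
    intro S
    rw [card_filter, Fintype.sum_prod_type]
    simp
  have cA : A.card = ∑ v, (out G K v).card := cnt _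
  have cE : E.card = ∑ v, (nb G v).card := cnt _
  have cB : B.card = ∑ v, (out G K v).card := by
    rw [hBd, card_filter, Fintype.sum_prod_type_right]
    simp
  have hint : A ∩ B = bi G K := by
    ext x; simp [hA, hBd, bi]
  have hun : A ∪ B ⊆ E := by
    intro x hx
    simp only [hA, hBd, hE, mem_union, mem_filter, mem_univ, true_and] at hx ⊢
    rcases hx with hx | hx
    · exact (mem_filter.1 hx).1
    · have := (mem_nb G).1 (mem_filter.1 hx).1
      exact (mem_nb G).2 this.symm
  have := card_union_add_card_inter A B
  have := card_le_card hun
  rw [hint] at *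
  omega

lemma two_local (K : ℕ) (v : V) :
    ∑ z ∈ nb G v, (hn G v z).card ≤ (out G K v).card ^ 2 + 2 * K * (nb G v).card := by
  have h1 : ∀ z ∈ nb G v, (hn G v z).card ≤ K + (if z ∈ out G K v then (out G K v).card else 0)
      + ((nb G v).filter (fun p => p ∉ out G K v ∧ p ∈ hn G v z)).card - 
        (if z ∈ out G K v then K else 0) := by
    intro z hz
    by_cases h : z ∈ out G K v
    · simp only [h, if_true]
      have : hn G v z ⊆ out G K v ∪ (nb G v).filter (fun p => p ∉ out G K v ∧ p ∈ hn G v z) := by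
        intro p hp
        by_cases hpo : p ∈ out G K v
        · exact mem_union_left _ hpo
        · exact mem_union_right _ (mem_filter.2 ⟨(mem_filter.1 hp).1, hpo, hp⟩)
      have := card_le_card this
      have := card_union_le (out G K v)
        ((nb G v).filter (fun p => p ∉ out G K v ∧ p ∈ hn G v z))
      omega
    · simp only [h, if_false]
      have : ¬ K ≤ (hn G v z).card := fun hh => h (mem_filter.2 ⟨hz, hh⟩)
      omega
  have h2 : ∑ z ∈ nb G v, ((nb G v).filter (fun p => p ∉ out G K v ∧ p ∈ hn G v z)).card
      ≤ K * (nb G v).card := by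
    have := sum_card_bipartiteAbove_eq_sum_card_bipartiteBelow (s := nb G v) (t := nb G v)
      (fun z p => p ∉ out G K v ∧ p ∈ hn G v z)
    simp only [bipartiteAbove, bipartiteBelow] at this
    rw [this, mul_comm, ← smul_eq_mul]
    apply sum_le_card_nsmul
    intro p hp
    by_cases hpo : p ∈ out G K v
    · simp [hpo]
    · have h3 : ¬ K ≤ (hn G v p).card := fun hh => hpo (mem_filter.2 ⟨hp, hh⟩)
      have h4 : (nb G v).filter (fun z => p ∉ out G K v ∧ p ∈ hn G v z) ⊆ hn G v p := by
        intro z hz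
        rw [mem_filter] at hz
        have h5 := (mem_filter.1 hz.2.2).2
        refine mem_filter.2 ⟨hz.1, h5.1.symm, ?_⟩
        rw [com_comm]
        exact h5.2
      have := card_le_card h4
      omega
  have h3 : ∑ z ∈ nb G v, (if z ∈ out G K v then (out G K v).card else 0)
      = (out G K v).card ^ 2 := by
    rw [← sum_filter, sum_const, smul_eq_mul, sq]
    congr 2
    ext z
    simp only [mem_filter, and_iff_right_iff_imp]
    exact fun h => (mem_filter.1 h).1
  calc ∑ z ∈ nb G v, (hn G v z).card
      ≤ ∑ z ∈ nb G v, (K + (if z ∈ out G K v then (out G K v).card else 0)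
      + ((nb G v).filter (fun p => p ∉ out G K v ∧ p ∈ hn G v z)).card) :=
        sum_le_sum fun z hz => (h1 z hz).trans (Nat.sub_le _ _)
    _ = (nb G v).card * K + (out G K v).card ^ 2 +
      ∑ z ∈ nb G v, ((nb G v).filter (fun p => p ∉ out G K v ∧ p ∈ hn G v z)).card := by
        rw [sum_add_distrib, sum_add_distrib, h3, sum_const, smul_eq_mul]
    _ ≤ _ := by nlinarith

lemma main_count (hB : Free G) (K : ℕ) :
    2 * ∑ v, (nb G v).card ^ 2 ≤ 2 * (Fintype.card V) ^ 2 + ∑ v, (out G K v).card ^ 2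
      + (2 * K + 8) * ∑ v, (nb G v).card := by
  have d1 := dc G (fun z p => z ≠ p)
  have d2 := dc G (fun z p => z ≠ p ∧ (com G z p).card = 2)
  have d3 := dc G (fun z p => z ≠ p ∧ 3 ≤ (com G z p).card)
  have e1 : ∑ v, (nb G v).card ^ 2 ≤
      (∑ v, ∑ z ∈ nb G v, ((nb G v).filter (fun p => z ≠ p)).card) + ∑ v, (nb G v).card := by
    rw [← sum_add_distrib]
    refine sum_le_sum fun v _ => ?_
    have : (nb G v).card * (nb G v).card ≤
        ∑ z ∈ nb G v, (((nb G v).filter (fun p => z ≠ p)).card + 1) := by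
      rw [← smul_eq_mul]
      apply card_nsmul_le_sum
      intro z hz
      have := pred_card_le_card_erase (s := nb G v) (a := z)
      have h : (nb G v).erase z ⊆ (nb G v).filter (fun p => z ≠ p) := by
        intro p hp
        rw [mem_erase] at hp
        exact mem_filter.2 ⟨hp.2, hp.1.symm⟩
      have := card_le_card h
      omega
    rw [sum_add_distrib, sum_const, smul_eq_mul, mul_one] at this
    rw [sq]
    exact this
  have e2 : ∑ v, ∑ z ∈ nb G v,
      ((nb G v).filter (fun p => z ≠ p ∧ (com G z p).card = 2)).card ≤
      ∑ v, (out G K v).card ^ 2 + 2 * K * ∑ v, (nb G v).card := by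
    rw [mul_sum, ← sum_add_distrib]
    refine sum_le_sum fun v _ => le_trans (sum_le_sum fun z _ => card_le_card ?_) (two_local K v)
    intro p hp
    rw [mem_filter] at hp
    exact mem_filter.2 ⟨hp.1, hp.2.1, hp.2.2.ge⟩
  have e3 : ∑ v, ∑ z ∈ nb G v,
      ((nb G v).filter (fun p => z ≠ p ∧ 3 ≤ (com G z p).card)).card ≤
      3 * ∑ v, (nb G v).card := by
    rw [mul_sum]
    refine sum_le_sum fun v _ => ?_
    rw [mul_comm, ← smul_eq_mul]
    apply sum_le_card_nsmul
    intro z hz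
    exact card_three hB v z ((mem_nb G).1 hz)
  have e0 : 2 * ∑ z, ∑ p, (if z ≠ p then (com G z p).card else 0) ≤
      2 * (Fintype.card V) ^ 2 +
      ∑ z, ∑ p, (if z ≠ p ∧ (com G z p).card = 2 then (com G z p).card else 0) +
      2 * ∑ z, ∑ p, (if z ≠ p ∧ 3 ≤ (com G z p).card then (com G z p).card else 0) := by
    have hc : 2 * (Fintype.card V) ^ 2 = ∑ _z : V, ∑ _p : V, 2 := by
      simp; ring
    rw [hc]
    simp only [mul_sum, ← sum_add_distrib]
    refine sum_le_sum fun z _ => sum_le_sum fun p _ => ?_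
    by_cases hzp : z = p
    · simp [hzp]
    · simp only [ne_eq, hzp, not_false_eq_true, if_true, true_and]
      split_ifs <;> omega
  rw [d1, d2, d3] at e0
  nlinarith

lemma quad (L d a : ℝ) (hL : 0 ≤ L) (ha : 0 ≤ a) (had : a ≤ d) :
    L * (11 / 2 * d - 3 / 2 * a) - 8 * L ^ 2 ≤ d ^ 2 - a ^ 2 / 2 := by
  obtain ⟨D, rfl⟩ : ∃ D, d = a + D := ⟨d - a, by ring⟩
  have hD : 0 ≤ D := by linarith
  by_cases h : 11 * L / 2 ≤ 2 * a + D
  · nlinarith [sq_nonneg (a - 4 * L), mul_nonneg hD (sub_nonneg.2 h)]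
  · push Not at h
    nlinarith [sq_nonneg (a - 4 * L), sq_nonneg (D - 11 / 4 * L), sq_nonneg (a + 2 * D - 4 * L),
      mul_nonneg ha hD, mul_nonneg ha hL, mul_nonneg hD hL, sq_nonneg L,
      mul_nonneg ha (sub_nonneg.2 h.le)]

lemma final_count (hB : Free G) (e : ℕ) (he : ∑ v, (nb G v).card = 2 * e) :
    (2775 / 1000 : ℝ) * (e : ℝ) ^ 2 ≤ (Fintype.card V : ℝ) ^ 3 + 50 * e * (Fintype.card V : ℝ) := by
  have h1 := main_count hB 21
  have h2 := out_sum (G := G) 21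
  have h3 := bi_card hB 20 (by norm_num)
  norm_num only at h3
  rw [he] at h1 h2 h3
  have hn0 : Fintype.card V = 0 → e = 0 := by
    intro h
    haveI := Fintype.card_eq_zero_iff.1 h
    simp at he
    omega
  set n := Fintype.card V with hn
  rcases Nat.eq_zero_or_pos n with h0 | hpos
  · simp [hn0 h0, h0]
  have hnR : (0 : ℝ) < n := by exact_mod_cast hpos
  set L : ℝ := 589 / 1000 * e / n with hL
  have hL0 : 0 ≤ L := by positivity
  have hq : ∀ v, L * (11 / 2 * ((nb G v).card : ℝ) - 3 / 2 * ((out G 21 v).card : ℝ)) - 8 * L ^ 2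
      ≤ ((nb G v).card : ℝ) ^ 2 - ((out G 21 v).card : ℝ) ^ 2 / 2 := by
    intro v
    refine quad L _ _ hL0 (by positivity) ?_
    exact_mod_cast card_le_card (filter_subset _ _)
  have hs := sum_le_sum (s := univ) fun v _ => hq v
  rw [sum_sub_distrib, ← mul_sum, sum_sub_distrib, ← mul_sum, ← mul_sum, sum_sub_distrib,
    ← sum_div, sum_const, card_univ, nsmul_eq_mul] at hs
  have heR : ∑ v, ((nb G v).card : ℝ) = 2 * e := by exact_mod_cast he
  have h1R : 2 * ∑ v, ((nb G v).card : ℝ) ^ 2 ≤ 2 * (n : ℝ) ^ 2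
      + ∑ v, ((out G 21 v).card : ℝ) ^ 2 + (2 * 21 + 8) * (2 * e) := by exact_mod_cast h1
  have h2R : 2 * ∑ v, ((out G 21 v).card : ℝ) ≤ 2 * e + (bi G 21).card := by exact_mod_cast h2
  have h3R : 20 * ((bi G 21).card : ℝ) ≤ 2 * e := by exact_mod_cast h3
  rw [heR, ← hn] at hs
  have h4 : ∑ v, ((out G 21 v).card : ℝ) ≤ 21 / 20 * e := by linarith
  have h5 : L * (377 / 40 * e) - n * (8 * L ^ 2) ≤ (n : ℝ) ^ 2 + 50 * e := by
    have := mul_le_mul_of_nonneg_left h4 hL0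
    nlinarith
  have h6 : L * n = 589 / 1000 * e := by rw [hL]; field_simp
  have h7 := mul_le_mul_of_nonneg_right h5 hnR.le
  have h8 : (L * (377 / 40 * e) - n * (8 * L ^ 2)) * n
      = (L * n) * (377 / 40 * e) - 8 * (L * n) ^ 2 := by ring
  rw [h8, h6] at h7
  nlinarith [sq_nonneg (e : ℝ)]

end

end B2

theorem ex_B2_upper (ε : ℝ) (hε : 0 < ε) :
    ∃ N : ℕ, ∀ n : ℕ, N ≤ n → ∀ G : SimpleGraph (Fin n),
      ¬ ContainsCopy (Bgraph 2) G →
      (G.edgeSet.ncard : ℝ) ≤ (2 / Real.sqrt 11 + ε) * (n : ℝ) ^ (3/2 : ℝ) := by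
  classical
  refine ⟨20000000, fun n hn G hG => ?_⟩
  have hB := B2.free_of_not_contains G hG
  have he : ∑ v, (B2.nb G v).card = 2 * G.edgeSet.ncard := by
    have h := G.sum_degrees_eq_twice_card_edges
    rw [Set.ncard_eq_toFinset_card', Set.toFinset_card, ← SimpleGraph.edgeFinset_card, ← h]
    refine Finset.sum_congr rfl fun v _ => ?_
    rw [← SimpleGraph.card_neighborFinset_eq_degree]
    congr 1
    ext w
    simp [B2.nb]
  have hc := B2.final_count hB _ he
  rw [Fintype.card_fin] at hc
  generalize G.edgeSet.ncard = e at hc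
  have hnR : (20000000 : ℝ) ≤ n := by exact_mod_cast hn
  have hn0 : (0 : ℝ) < n := by linarith
  have heR : (0 : ℝ) ≤ e := by positivity
  have hx0 : (0 : ℝ) ≤ (n : ℝ) ^ (3/2 : ℝ) := by positivity
  have hx2 : ((n : ℝ) ^ (3/2 : ℝ)) ^ 2 = (n : ℝ) ^ 3 := by
    rw [← Real.rpow_natCast, ← Real.rpow_mul hn0.le, ← Real.rpow_natCast]
    norm_num
  have hs2 : (2 / Real.sqrt 11) ^ 2 = 4 / 11 := by
    rw [div_pow, Real.sq_sqrt (by norm_num)]; norm_num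
  have hs0 : 0 ≤ 2 / Real.sqrt 11 := by positivity
  have hsq : (e : ℝ) ^ 2 ≤ 4 / 11 * (n : ℝ) ^ 3 := by
    by_contra hcon
    push Not at hcon
    have h1 : (e : ℝ) * (25 / 1000 * e) < e * (50 * n) := by nlinarith
    have h2 : 25 / 1000 * (e : ℝ) < 50 * n := lt_of_mul_lt_mul_left h1 heR
    have h3 : (e : ℝ) < 2000 * n := by linarith
    have h4 : (e : ℝ) ^ 2 ≤ (2000 * n) ^ 2 := pow_le_pow_left₀ heR h3.le 2
    have h5 : (n : ℝ) ^ 2 * 20000000 ≤ (n : ℝ) ^ 2 * n :=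
      mul_le_mul_of_nonneg_left hnR (by positivity)
    nlinarith [pow_pos hn0 2]
  have h9 : (e : ℝ) ≤ 2 / Real.sqrt 11 * (n : ℝ) ^ (3/2 : ℝ) := by
    refine (sq_le_sq₀ heR (by positivity)).1 ?_
    rw [mul_pow, hs2, hx2]
    exact hsq
  nlinarith [mul_nonneg hε.le hx0]
end

section
/- For every odd integer t ≥ 1 and every ε > 0 there exists N such that for all n ≥ N there exists a bipartite graph G on n vertices containing no subgraph isomorphic to B_t with e(G) ≥ (√⌊(t+1)/2⌋/(2√2) − ε)·n^{3/2}. (That is, ex_bip(n, B_t) ≥ (√⌊(t+1)/2⌋/(2√2))(1+o(1))·n^{3/2} for odd t.) -/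
open SimpleGraph

/-- point-line incidence graph of the affine plane (without vertical lines) -/
def incGraph (F : Type) [Field F] : SimpleGraph ((F × F) ⊕ (F × F)) where
  Adj := fun a b => match a, b with
    | Sum.inl p, Sum.inr l => p.2 = l.1 * p.1 + l.2
    | Sum.inr l, Sum.inl p => p.2 = l.1 * p.1 + l.2
    | _, _ => False
  symm := ⟨by rintro (p | l) (p' | l') h <;> simp_all⟩
  loopless := ⟨by rintro (p | l) h <;> simp at h⟩

lemma incGraph_key {F : Type} [Field F] {x y x' y' a b a' b' : F}
    (h1 : y = a * x + b) (h2 : y' = a * x' + b) (h3 : y' = a' * x' + b')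
    (h4 : y = a' * x + b') : ((x, y) = (x', y')) ∨ ((a, b) = (a', b')) := by
  have h : (a - a') * (x - x') = 0 := by linear_combination -h1 + h2 - h3 + h4
  rcases mul_eq_zero.1 h with h | h
  · right
    have ha : a = a' := sub_eq_zero.1 h
    subst ha
    simp only [Prod.mk.injEq, true_and]
    linear_combination h4 - h1
  · left
    have ha : x = x' := sub_eq_zero.1 h
    subst ha
    simp only [Prod.mk.injEq, true_and]
    rw [h1, h2]

lemma incGraph_c4 {F : Type} [Field F] (a b c d : (F × F) ⊕ (F × F))
    (h1 : (incGraph F).Adj a b) (h2 : (incGraph F).Adj b c) (h3 : (incGraph F).Adj c d)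
    (h4 : (incGraph F).Adj d a) : a = c ∨ b = d := by
  rcases a with ⟨x, y⟩ | ⟨x, y⟩ <;> rcases b with ⟨x2, y2⟩ | ⟨x2, y2⟩ <;>
  rcases c with ⟨x3, y3⟩ | ⟨x3, y3⟩ <;> rcases d with ⟨x4, y4⟩ | ⟨x4, y4⟩ <;>
  simp only [incGraph] at h1 h2 h3 h4
  · have := incGraph_key h1 h2 h3 h4
    simpa using this
  · have := incGraph_key h1 h4 h3 h2
    simp only [Sum.inr.injEq, Sum.inl.injEq]
    tauto

lemma book_free {W : Type} [DecidableEq W] [Fintype W] (H : SimpleGraph W)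
    (hH : ∀ a b c d, H.Adj a b → H.Adj b c → H.Adj c d → H.Adj d a → a = c ∨ b = d)
    (k t : ℕ) (hkt : t + 1 = 2 * k) :
    ¬ ContainsCopy (Bgraph t) (H.comap (Prod.fst : W × Fin k → W)) := by
  rintro ⟨f, hf, hadj⟩
  have key : ∀ i : Fin t, (f (1, Sum.inr i)).1 = (f (0, Sum.inl 0)).1 ∨
      (f (0, Sum.inr i)).1 = (f (1, Sum.inl 0)).1 := by
    intro i
    have e1 : (Bgraph t).Adj (0, Sum.inl 0) (1, Sum.inl 0) := by simp [Bgraph]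
    have e2 : (Bgraph t).Adj (1, Sum.inl 0) (1, Sum.inr i) := by simp [Bgraph]
    have e3 : (Bgraph t).Adj (1, Sum.inr i) (0, Sum.inr i) := by simp [Bgraph]
    have e4 : (Bgraph t).Adj (0, Sum.inr i) (0, Sum.inl 0) := by simp [Bgraph]
    have := hH _ _ _ _ (hadj e1) (hadj e2) (hadj e3) (hadj e4)
    rcases this with h | h
    · exact Or.inl h.symm
    · exact Or.inr h.symm
  have bound : ∀ (s s' : Fin 2) (A : Finset (Fin t)),
      (∀ i ∈ A, (f (s, Sum.inr i)).1 = (f (s', Sum.inl 0)).1) → A.card + 1 ≤ k := by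
    intro s s' A hA
    let g : Option A → Fin k := fun o => match o with
      | none => (f (s', Sum.inl 0)).2
      | some i => (f (s, Sum.inr i.1)).2
    have hg : Function.Injective g := by
      rintro (_ | i) (_ | j) h
      · rfl
      · exfalso
        have := hf (Prod.ext (hA j.1 j.2).symm h : f (s', Sum.inl 0) = f (s, Sum.inr j.1))
        simp at this
      · exfalso
        have := hf (Prod.ext (hA i.1 i.2) h : f (s, Sum.inr i.1) = f (s', Sum.inl 0))
        simp at this
      · have := hf (Prod.ext ((hA i.1 i.2).trans (hA j.1 j.2).symm) h :
          f (s, Sum.inr i.1) = f (s, Sum.inr j.1))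
        simp only [Prod.mk.injEq, Sum.inr.injEq, true_and] at this
        exact congrArg some (Subtype.ext this)
    have := Fintype.card_le_of_injective g hg
    simpa using this
  let A := Finset.univ.filter fun i : Fin t => (f (1, Sum.inr i)).1 = (f (0, Sum.inl 0)).1
  let B := Finset.univ.filter fun i : Fin t => (f (0, Sum.inr i)).1 = (f (1, Sum.inl 0)).1
  have hA := bound 1 0 A (by intro i hi; simpa [A] using hi)
  have hB := bound 0 1 B (by intro i hi; simpa [B] using hi)
  have hU : A ∪ B = Finset.univ := by
    ext i; simpa [A, B] using key i
  have := Finset.card_union_le A B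
  rw [hU] at this
  simp only [Finset.card_univ, Fintype.card_fin] at this
  omega

lemma comb_aux (F : Type) [Field F] [Fintype F] (t k q n : ℕ) (hF : Fintype.card F = q)
    (hkt : t + 1 = 2 * k) (hn : 2 * k * q ^ 2 ≤ n) :
    ∃ G : SimpleGraph (Fin n), G.Colorable 2 ∧ ¬ ContainsCopy (Bgraph t) G ∧
      k ^ 2 * q ^ 3 ≤ G.edgeSet.ncard := by
  classical
  have hV : Fintype.card (((F × F) ⊕ (F × F)) × Fin k) ≤ Fintype.card (Fin n) := by
    simp only [Fintype.card_prod, Fintype.card_sum, Fintype.card_fin, hF]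
    refine le_trans (le_of_eq ?_) hn
    ring
  obtain ⟨e⟩ := Function.Embedding.nonempty_of_card_le hV
  let G : SimpleGraph (((F × F) ⊕ (F × F)) × Fin k) := (incGraph F).comap Prod.fst
  have hfree : ¬ ContainsCopy (Bgraph t) G := book_free _ incGraph_c4 k t hkt
  refine ⟨G.map e, ?_, ?_, ?_⟩
  · let c : Fin n → Fin 2 := fun x => if ∃ p i, e (Sum.inl p, i) = x then 0 else 1
    have c0 : ∀ p i, c (e (Sum.inl p, i)) = 0 := by
      intro p i
      exact if_pos ⟨p, i, rfl⟩
    have c1 : ∀ p i, c (e (Sum.inr p, i)) = 1 := by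
      intro p i
      apply if_neg
      rintro ⟨p', i', h⟩
      have := e.injective h
      simp at this
    refine ⟨SimpleGraph.Coloring.mk c ?_⟩
    intro a b hab
    rw [SimpleGraph.map_adj] at hab
    obtain ⟨⟨u, i⟩, ⟨v, j⟩, h, rfl, rfl⟩ := hab
    change (incGraph F).Adj u v at h
    rcases u with u | u <;> rcases v with v | v
    · exact h.elim
    · rw [c0, c1]; decide
    · rw [c0, c1]; decide
    · exact h.elim
  · rintro ⟨f, hf, hadj⟩
    apply hfree
    have hnb : ∀ a, ∃ b, (Bgraph t).Adj a b := by
      rintro ⟨s, x⟩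
      refine ⟨(1 - s, x), ?_⟩
      fin_cases s <;> simp [Bgraph]
    have hr : ∀ a, ∃ v, e v = f a := by
      intro a
      obtain ⟨b, hb⟩ := hnb a
      have := hadj hb
      rw [SimpleGraph.map_adj] at this
      obtain ⟨u, v, -, h, -⟩ := this
      exact ⟨u, h⟩
    choose g hg using hr
    refine ⟨g, ?_, ?_⟩
    · intro a b h
      apply hf
      rw [← hg, ← hg, h]
    · intro a b h
      have := hadj h
      rw [← hg, ← hg] at this
      simpa using this
  · let g : (F × F × F) × Fin k × Fin k → Sym2 (Fin n) := fun z =>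
      s(e (Sum.inl (z.1.2.2, z.1.1 * z.1.2.2 + z.1.2.1), z.2.1),
        e (Sum.inr (z.1.1, z.1.2.1), z.2.2))
    have hg : Function.Injective g := by
      rintro ⟨⟨a, b, x⟩, i, j⟩ ⟨⟨a', b', x'⟩, i', j'⟩ h
      simp only [g, Sym2.eq_iff, e.injective.eq_iff, Prod.mk.injEq, Sum.inl.injEq, Sum.inr.injEq,
        reduceCtorEq, false_and, and_false, or_false] at h
      obtain ⟨⟨⟨h1, -⟩, h2⟩, ⟨h3, h4⟩, h5⟩ := h
      simp [h1, h2, h3, h4, h5]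
    have hsub : Set.range g ⊆ (G.map e).edgeSet := by
      rintro _ ⟨⟨⟨a, b, x⟩, i, j⟩, rfl⟩
      simp only [g, SimpleGraph.mem_edgeSet, SimpleGraph.map_adj]
      refine ⟨_, _, ?_, rfl, rfl⟩
      simp [G, incGraph]
    have h1 := Set.ncard_le_ncard hsub (Set.toFinite _)
    rw [← Set.image_univ, Set.ncard_image_of_injective _ hg, Set.ncard_univ,
      Nat.card_eq_fintype_card] at h1
    simp only [Fintype.card_prod, Fintype.card_fin, hF] at h1
    refine le_trans (le_of_eq ?_) h1
    ring

lemma comb (t k q n : ℕ) (hkt : t + 1 = 2 * k) (hq : IsPrimePow q) (hn : 2 * k * q ^ 2 ≤ n) :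
    ∃ G : SimpleGraph (Fin n), G.Colorable 2 ∧ ¬ ContainsCopy (Bgraph t) G ∧
      k ^ 2 * q ^ 3 ≤ G.edgeSet.ncard := by
  obtain ⟨p, m, hp, hm, rfl⟩ := (isPrimePow_nat_iff q).1 hq
  have : Fact p.Prime := ⟨hp⟩
  have : Fintype (GaloisField p m) := Fintype.ofFinite _
  refine comb_aux (GaloisField p m) t k _ n ?_ hkt hn
  rw [← Nat.card_eq_fintype_card]
  exact GaloisField.card p m hm.ne'

open MeasureTheory Filter Topology FourierTransform

/-- Compactly supported weight whose Fourier transform is nonpositive off `[-1,1]`. -/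
noncomputable def bphi (t : ℝ) : ℝ :=
  1 - min |t| 1 + Real.sin (2 * Real.pi * min |t| 1) / (2 * Real.pi)

lemma bphi_continuous : Continuous bphi := by unfold bphi; fun_prop

lemma bphi_zero : bphi 0 = 1 := by simp [bphi]

lemma bphi_eq_zero {t : ℝ} (h : 1 ≤ |t|) : bphi t = 0 := by
  simp [bphi, min_eq_right h]

lemma bphi_support : HasCompactSupport bphi := by
  apply HasCompactSupport.intro (isCompact_Icc (a := (-1:ℝ)) (b := 1))
  intro x hx
  apply bphi_eq_zero
  by_contra! h
  exact hx (by rw [abs_lt] at h; exact ⟨h.1.le, h.2.le⟩)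

lemma bphi_integrable : Integrable bphi := bphi_continuous.integrable_of_hasCompactSupport bphi_support

lemma bphiC_integrable : Integrable (fun t => (bphi t : ℂ)) := bphi_integrable.ofReal

/-- The transform. -/
noncomputable def bFT (w : ℝ) : ℂ := 𝓕 (fun t => (bphi t : ℂ)) w

lemma bFT_eq (w : ℝ) : bFT w = ∫ t : ℝ, Complex.exp (↑(-2 * Real.pi * t * w) * Complex.I) * bphi t := by
  rw [bFT, Real.fourier_real_eq_integral_exp_smul]
  rfl

lemma bFT_continuous : Continuous bFT :=
  VectorFourier.fourierIntegral_continuous Real.continuous_fourierChar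
    (innerSL ℝ).continuous₂ bphiC_integrable

lemma bFT_int_integrable (w : ℝ) :
    Integrable (fun t : ℝ => Complex.exp (↑(-2 * Real.pi * t * w) * Complex.I) * bphi t) := by
  refine bphiC_integrable.bdd_mul (c := 1) (by fun_prop) (.of_forall fun t => ?_)
  rw [Complex.norm_exp_ofReal_mul_I]

lemma bFT_re (w : ℝ) : (bFT w).re = ∫ t : ℝ, bphi t * Real.cos (2 * Real.pi * t * w) := by
  rw [bFT_eq, ← RCLike.re_eq_complex_re, ← integral_re (bFT_int_integrable w)]
  congr 1
  ext t
  simp only [RCLike.re_eq_complex_re, Complex.re_mul_ofReal, Complex.exp_ofReal_mul_I_re]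
  rw [mul_comm]
  congr 1
  rw [← Real.cos_neg]
  ring_nf

lemma bFT_im (w : ℝ) : (bFT w).im = 0 := by
  rw [bFT_eq, ← RCLike.im_eq_complex_im, ← integral_im (bFT_int_integrable w)]
  have : ∀ f : ℝ → ℝ, (∀ t, f (-t) = - f t) → ∫ t, f t = 0 := by
    intro f hf
    have h := integral_neg_eq_self f volume
    simp only [hf, integral_neg] at h
    linarith
  apply this
  intro t
  simp only [RCLike.im_eq_complex_im, Complex.im_mul_ofReal, Complex.exp_ofReal_mul_I_im]
  have : bphi (-t) = bphi t := by simp [bphi]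
  rw [this, ← neg_mul, ← Real.sin_neg]
  ring_nf

lemma bFT_re' (w : ℝ) : (bFT w).re = 2 * ∫ t in (0:ℝ)..1,
    (1 - t + Real.sin (2 * Real.pi * t) / (2 * Real.pi)) * Real.cos (2 * Real.pi * t * w) := by
  rw [bFT_re]
  have h1 : ∀ t : ℝ, bphi t * Real.cos (2 * Real.pi * t * w) =
      (fun s => bphi s * Real.cos (2 * Real.pi * s * w)) |t| := by
    intro t
    rcases abs_cases t with ⟨h, -⟩ | ⟨h, -⟩
    · simp only [h]
    · simp only [h]
      congr 1
      · simp [bphi]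
      · rw [← Real.cos_neg]; ring_nf
  rw [integral_congr_ae (.of_forall h1),
    integral_comp_abs (f := fun s => bphi s * Real.cos (2 * Real.pi * s * w))]
  congr 1
  rw [intervalIntegral.integral_of_le zero_le_one,
    setIntegral_eq_of_subset_of_forall_sdiff_eq_zero (s := Set.Ioc (0:ℝ) 1) measurableSet_Ioi
      Set.Ioc_subset_Ioi_self]
  · apply setIntegral_congr_fun measurableSet_Ioc
    intro t ht
    simp [bphi, abs_of_pos ht.1, ht.2]
  · intro t ht
    have h2 : (1:ℝ) ≤ |t| := by
      have h0 : 0 < t := ht.1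
      rw [abs_of_pos h0]
      by_contra! h
      exact ht.2 ⟨h0, h.le⟩
    simp [bphi_eq_zero h2]

lemma bFT_formula (w : ℝ) (h0 : w ≠ 0) (h1 : w ≠ 1) (h2 : w ≠ -1) : (bFT w).re =
    (1 - Real.cos (2 * Real.pi * w)) / (2 * Real.pi ^ 2 * w ^ 2 * (1 - w ^ 2)) := by
  have hpi := Real.pi_pos.ne'
  have ha : 1 + w ≠ 0 := fun h => h2 (by linarith)
  have hb : 1 - w ≠ 0 := fun h => h1 (by linarith)
  have hd : ∀ t : ℝ, HasDerivAt (fun t : ℝ =>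
      (1 - t) * Real.sin (2 * Real.pi * w * t) / (2 * Real.pi * w)
      - Real.cos (2 * Real.pi * w * t) / (2 * Real.pi * w) ^ 2
      - Real.cos (2 * Real.pi * (1 + w) * t) / (8 * Real.pi ^ 2 * (1 + w))
      - Real.cos (2 * Real.pi * (1 - w) * t) / (8 * Real.pi ^ 2 * (1 - w)))
      ((1 - t + Real.sin (2 * Real.pi * t) / (2 * Real.pi)) * Real.cos (2 * Real.pi * t * w)) t := by
    intro t
    have hl : ∀ c : ℝ, HasDerivAt (fun t : ℝ => c * t) c t := fun c => by
      simpa using (hasDerivAt_id t).const_mul c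
    have d1 := (((hasDerivAt_id t).const_sub 1).mul (hl (2 * Real.pi * w)).sin).div_const
      (2 * Real.pi * w)
    have d2 := (hl (2 * Real.pi * w)).cos.div_const ((2 * Real.pi * w) ^ 2)
    have d3 := (hl (2 * Real.pi * (1 + w))).cos.div_const (8 * Real.pi ^ 2 * (1 + w))
    have d4 := (hl (2 * Real.pi * (1 - w))).cos.div_const (8 * Real.pi ^ 2 * (1 - w))
    refine (((d1.sub d2).sub d3).sub d4).congr_deriv ?_
    have e1 : 2 * Real.pi * (1 + w) * t = 2 * Real.pi * t + 2 * Real.pi * w * t := by ring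
    have e2 : 2 * Real.pi * (1 - w) * t = 2 * Real.pi * t - 2 * Real.pi * w * t := by ring
    have e3 : 2 * Real.pi * t * w = 2 * Real.pi * w * t := by ring
    rw [e1, e2, e3, Real.sin_add, Real.sin_sub]
    simp only [id]
    field_simp
    ring
  rw [bFT_re', intervalIntegral.integral_eq_sub_of_hasDerivAt (fun t _ => hd t)
    (by apply Continuous.intervalIntegrable; fun_prop)]
  have e1 : 2 * Real.pi * (1 + w) * 1 = 2 * Real.pi * w + 2 * Real.pi := by ring
  have e2 : 2 * Real.pi * (1 - w) * 1 = 2 * Real.pi - 2 * Real.pi * w := by ring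
  rw [e1, e2, Real.cos_add_two_pi, Real.cos_two_pi_sub]
  simp only [mul_one, mul_zero, Real.cos_zero, Real.sin_zero]
  have hc : 1 - w ^ 2 ≠ 0 := by
    have : 1 - w ^ 2 = (1 + w) * (1 - w) := by ring
    rw [this]; exact mul_ne_zero ha hb
  have hc' : 1 - w ^ 2 = (1 + w) * (1 - w) := by ring
  rw [hc']
  field_simp
  ring

lemma bFT_nonpos {w : ℝ} (h : 1 < |w|) : (bFT w).re ≤ 0 := by
  have h1 : 1 < w ^ 2 := by rw [← sq_abs]; nlinarith
  rw [bFT_formula w (by rintro rfl; norm_num at h1) (by rintro rfl; norm_num at h1)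
    (by rintro rfl; norm_num at h1)]
  apply div_nonpos_of_nonneg_of_nonpos
  · linarith [Real.cos_le_one (2 * Real.pi * w)]
  · apply mul_nonpos_of_nonneg_of_nonpos
    · positivity
    · linarith

lemma bFT_ofReal (w : ℝ) : bFT w = ((bFT w).re : ℂ) := by
  apply Complex.ext <;> simp [bFT_im]

lemma bFT_integrable : Integrable bFT := by
  set C := ∫ t, ‖bphi t‖ with hC
  have hC0 : 0 ≤ C := integral_nonneg fun _ => norm_nonneg _
  refine (integrable_inv_one_add_sq.const_mul (5 * C + 2)).mono'
    bFT_continuous.aestronglyMeasurable (.of_forall fun w => ?_)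
  rw [← div_eq_mul_inv, le_div_iff₀ (by positivity)]
  by_cases hw : 2 ≤ |w|
  · have h1 : 4 ≤ w ^ 2 := by rw [← sq_abs]; nlinarith
    have hp : 9 ≤ Real.pi ^ 2 := by nlinarith [Real.pi_gt_three]
    rw [bFT_ofReal, bFT_formula w (by rintro rfl; norm_num at h1) (by rintro rfl; norm_num at h1)
      (by rintro rfl; norm_num at h1), Complex.norm_real, Real.norm_eq_abs, abs_div,
      abs_of_nonneg (by linarith [Real.cos_le_one (2 * Real.pi * w)]), abs_mul,
      abs_of_nonneg (by positivity : 0 ≤ 2 * Real.pi ^ 2 * w ^ 2),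
      abs_of_nonpos (by linarith : 1 - w ^ 2 ≤ 0), div_mul_eq_mul_div, div_le_iff₀]
    · have h3 : (1 - Real.cos (2 * Real.pi * w)) * (1 + w ^ 2) ≤ 2 * (1 + w ^ 2) := by
        gcongr
        linarith [Real.neg_one_le_cos (2 * Real.pi * w)]
      have h4 : 2 * (1 + w ^ 2) ≤ 2 * (2 * Real.pi ^ 2 * w ^ 2 * -(1 - w ^ 2)) := by
        have : 1 * 3 ≤ Real.pi ^ 2 * -(1 - w ^ 2) := by
          apply mul_le_mul <;> linarith
        nlinarith
      have h5 : 0 ≤ 2 * Real.pi ^ 2 * w ^ 2 * -(1 - w ^ 2) := by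
        apply mul_nonneg (by positivity); linarith
      nlinarith
    · apply mul_pos (by positivity); linarith
  · push Not at hw
    have h1 : w ^ 2 ≤ 4 := by rw [← sq_abs]; nlinarith [abs_nonneg w]
    have h2 : ‖bFT w‖ ≤ C := by
      rw [bFT_eq]
      refine (norm_integral_le_integral_norm _).trans (le_of_eq ?_)
      rw [hC]
      congr 1
      ext t
      rw [norm_mul, Complex.norm_exp_ofReal_mul_I, one_mul, Complex.norm_real]
    nlinarith [norm_nonneg (bFT w)]

lemma bFT_integral : ∫ w, (bFT w).re = 1 := by
  have h := Continuous.fourierInv_fourier_eq (f := fun t => (bphi t : ℂ))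
    (Complex.continuous_ofReal.comp bphi_continuous) bphiC_integrable bFT_integrable
  have h0 := congrFun h 0
  rw [Real.fourierInv_eq'] at h0
  simp only [inner_zero_right, mul_zero, Complex.ofReal_zero, zero_mul, Complex.exp_zero, one_smul,
    bphi_zero] at h0
  have := integral_re bFT_integrable
  simp only [RCLike.re_eq_complex_re] at this
  rw [this]
  change ∫ v, bFT v = _ at h0
  rw [h0]; simp

open ArithmeticFunction in
lemma exists_bh : ∃ h : ℂ → ℂ, ContinuousOn h {s | 1 ≤ s.re} ∧
    ∀ s : ℂ, 1 < s.re → LSeries (fun n => ((vonMangoldt n : ℝ) : ℂ)) s = h s + 1 / (s - 1) := by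
  refine ⟨vonMangoldt.LFunctionResidueClassAux (1 : ZMod 1),
    vonMangoldt.continuousOn_LFunctionResidueClassAux 1, fun s hs => ?_⟩
  rw [vonMangoldt.eqOn_LFunctionResidueClassAux isUnit_one hs]
  have : (vonMangoldt.residueClass (1 : ZMod 1)) = fun n => vonMangoldt n := by
    ext n
    simp only [vonMangoldt.residueClass]
    rw [Set.indicator_of_mem]
    exact Subsingleton.elim _ _
  rw [this]
  simp

/-- the phase -/
noncomputable def bE (x t : ℝ) : ℂ := Complex.exp (↑(-2 * Real.pi * t * x) * Complex.I)

lemma bE_cont (x : ℝ) : Continuous (bE x) := by unfold bE; fun_prop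

lemma bE_norm (x t : ℝ) : ‖bE x t‖ = 1 := by rw [bE, Complex.norm_exp_ofReal_mul_I]

lemma bE_int (x : ℝ) : ∫ t : ℝ, bE x t * bphi t = bFT x := (bFT_eq x).symm

lemma bE_integrable (x : ℝ) : Integrable (fun t : ℝ => bE x t * bphi t) := bFT_int_integrable x

lemma bE_add (x y t : ℝ) : bE (x + y) t = bE x t * bE y t := by
  rw [bE, bE, bE, ← Complex.exp_add]; congr 1; push_cast; ring

lemma term_eq (σ l u t : ℝ) (n : ℕ) :
    bE (-(l * u)) t * LSeries.term (fun n => ((ArithmeticFunction.vonMangoldt n : ℝ) : ℂ))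
      (σ + (2 * Real.pi * l * t : ℝ) * Complex.I) n =
    ((ArithmeticFunction.vonMangoldt n / (n : ℝ) ^ σ : ℝ) : ℂ) * bE (l * (Real.log n - u)) t := by
  rcases eq_or_ne n 0 with rfl | hn
  · simp
  have hn' : (n : ℂ) ≠ 0 := by exact_mod_cast hn
  rw [LSeries.term_of_ne_zero hn, show l * (Real.log n - u) = l * Real.log n + -(l * u) by ring,
    bE_add, Complex.cpow_add _ _ hn', Complex.ofReal_div, Complex.ofReal_cpow (Nat.cast_nonneg n)]
  have : (n : ℂ) ^ (((2 * Real.pi * l * t : ℝ) : ℂ) * Complex.I) * bE (l * Real.log n) t = 1 := by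
    rw [Complex.cpow_def_of_ne_zero hn', bE, ← Complex.exp_add, ← Complex.natCast_log]
    rw [← Complex.exp_zero]
    congr 1
    push_cast
    ring
  have hne : (n : ℂ) ^ (((2 * Real.pi * l * t : ℝ) : ℂ) * Complex.I) ≠ 0 := left_ne_zero_of_mul_eq_one this
  rw [← eq_inv_of_mul_eq_one_right this |>.symm]
  rw [Complex.ofReal_natCast]
  field_simp

lemma main_sum (σ l u : ℝ) (hσ : 1 < σ) :
    HasSum (fun n : ℕ => ((ArithmeticFunction.vonMangoldt n / (n : ℝ) ^ σ : ℝ) : ℂ) *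
        bFT (l * (Real.log n - u)))
      (∫ t : ℝ, bE (-(l * u)) t * bphi t *
        LSeries (fun n => ((ArithmeticFunction.vonMangoldt n : ℝ) : ℂ))
          (σ + (2 * Real.pi * l * t : ℝ) * Complex.I)) := by
  have hre : ∀ t : ℝ, ((σ : ℂ) + (2 * Real.pi * l * t : ℝ) * Complex.I).re = σ := by
    intro t; simp
  have hsum : Summable fun n : ℕ => ArithmeticFunction.vonMangoldt n / (n : ℝ) ^ σ := by
    have := (ArithmeticFunction.LSeriesSummable_vonMangoldt (s := (σ : ℂ)) (by simpa using hσ)).norm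
    refine this.congr fun n => ?_
    rw [LSeries.norm_term_eq]
    split_ifs with h
    · simp [h]
    · simp [abs_of_nonneg ArithmeticFunction.vonMangoldt_nonneg]
  have hnn : ∀ n : ℕ, 0 ≤ ArithmeticFunction.vonMangoldt n / (n : ℝ) ^ σ := fun n =>
    div_nonneg ArithmeticFunction.vonMangoldt_nonneg (by positivity)
  have key := hasSum_integral_of_summable_integral_norm (μ := (volume : Measure ℝ))
    (F := fun (n : ℕ) (t : ℝ) => ((ArithmeticFunction.vonMangoldt n / (n : ℝ) ^ σ : ℝ) : ℂ) *
      (bE (l * (Real.log n - u)) t * bphi t)) (fun n => (bE_integrable _).const_mul _) ?_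
  · simp only [integral_const_mul, bE_int] at key
    convert! key using 3 with t
    rw [LSeries, ← tsum_mul_left]
    apply tsum_congr
    intro n
    have := term_eq σ l u t n
    linear_combination (bphi t : ℂ) * this
  · simp only [norm_mul, bE_norm, one_mul, integral_const_mul, Complex.norm_real,
      Real.norm_of_nonneg (hnn _)]
    exact hsum.mul_right _

lemma pole_int (σ l u : ℝ) (hσ : 1 < σ) :
    ∫ t : ℝ, bE (-(l * u)) t * bphi t *
      (1 / ((σ + (2 * Real.pi * l * t : ℝ) * Complex.I : ℂ) - 1)) =
    ∫ x in Set.Ioi (0:ℝ), (Real.exp (-(σ - 1) * x) : ℂ) * bFT (l * (x - u)) := by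
  have h1 : ∀ t : ℝ, bE (-(l * u)) t * bphi t *
      (1 / ((σ + (2 * Real.pi * l * t : ℝ) * Complex.I : ℂ) - 1)) =
      ∫ x in Set.Ioi (0:ℝ), (Real.exp (-(σ - 1) * x) : ℂ) * (bE (l * (x - u)) t * bphi t) := by
    intro t
    have h := integral_exp_mul_complex_Ioi
      (a := -((σ + (2 * Real.pi * l * t : ℝ) * Complex.I : ℂ) - 1)) (by simp; linarith) 0
    have : ∀ x : ℝ, (Real.exp (-(σ - 1) * x) : ℂ) * (bE (l * (x - u)) t * bphi t) =
      (bE (-(l * u)) t * bphi t) *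
        Complex.exp (-((σ + (2 * Real.pi * l * t : ℝ) * Complex.I : ℂ) - 1) * x) := by
      intro x
      rw [show l * (x - u) = l * x + -(l * u) by ring, bE_add]
      have : (Real.exp (-(σ - 1) * x) : ℂ) * bE (l * x) t =
        Complex.exp (-((σ + (2 * Real.pi * l * t : ℝ) * Complex.I : ℂ) - 1) * x) := by
        rw [bE, Complex.ofReal_exp, ← Complex.exp_add]
        congr 1; push_cast; ring
      rw [← this]; ring
    simp_rw [this]
    rw [integral_const_mul, h]
    simp only [Complex.ofReal_zero, mul_zero, Complex.exp_zero, neg_div_neg_eq]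
  simp_rw [h1]
  rw [integral_integral_swap]
  · simp_rw [integral_const_mul, bE_int]
  · have hi := bphiC_integrable.mul_prod
      ((integrableOn_exp_mul_complex_Ioi (a := (-(σ - 1) : ℝ)) (by simp; linarith) 0))
    refine hi.mono ?_ (.of_forall fun z => ?_)
    · apply Continuous.aestronglyMeasurable
      have := bphi_continuous
      unfold Function.uncurry bE
      fun_prop
    · simp only [Function.uncurry, norm_mul, bE_norm, one_mul]
      rw [mul_comm]
      apply le_of_eq
      congr 1
      push_cast
      rfl

lemma main_ineq (h : ℂ → ℂ) (hc : ContinuousOn h {s | 1 ≤ s.re})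
    (hL : ∀ s : ℂ, 1 < s.re →
      LSeries (fun n => ((ArithmeticFunction.vonMangoldt n : ℝ) : ℂ)) s = h s + 1 / (s - 1))
    (l u : ℝ) (hl : 0 < l)
    (hno : ∀ n : ℕ, IsPrimePow n → 1 / l < |Real.log n - u|) (σ : ℝ) (hσ : 1 < σ) :
    (∫ t : ℝ, bE (-(l * u)) t * bphi t * h (σ + (2 * Real.pi * l * t : ℝ) * Complex.I)).re +
    ∫ x in Set.Ioi (0:ℝ), Real.exp (-(σ - 1) * x) * (bFT (l * (x - u))).re ≤ 0 := by
  have hs := main_sum σ l u hσ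
  have hpath : Continuous fun t : ℝ => (σ : ℂ) + (2 * Real.pi * l * t : ℝ) * Complex.I := by fun_prop
  have hcs : HasCompactSupport fun t : ℝ => (bphi t : ℂ) :=
    bphi_support.comp_left (g := Complex.ofReal) rfl
  have i1 : Integrable fun t : ℝ => bE (-(l * u)) t * bphi t *
      h (σ + (2 * Real.pi * l * t : ℝ) * Complex.I) := by
    apply Continuous.integrable_of_hasCompactSupport
    · refine ((bE_cont _).mul (Complex.continuous_ofReal.comp bphi_continuous)).mul ?_
      apply hc.comp_continuous hpath
      intro t; simpa using hσ.le
    · exact (hcs.mul_left).mul_right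
  have i2 : Integrable fun t : ℝ => bE (-(l * u)) t * bphi t *
      (1 / ((σ + (2 * Real.pi * l * t : ℝ) * Complex.I : ℂ) - 1)) := by
    apply Continuous.integrable_of_hasCompactSupport
    · refine ((bE_cont _).mul (Complex.continuous_ofReal.comp bphi_continuous)).mul ?_
      refine Continuous.div continuous_const (hpath.sub continuous_const) ?_
      intro t ht
      have := congrArg Complex.re ht
      simp at this
      linarith
    · exact (hcs.mul_left).mul_right
  have e1 : (∫ t : ℝ, bE (-(l * u)) t * bphi t *
        LSeries (fun n => ((ArithmeticFunction.vonMangoldt n : ℝ) : ℂ))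
          (σ + (2 * Real.pi * l * t : ℝ) * Complex.I)) =
      (∫ t : ℝ, bE (-(l * u)) t * bphi t * h (σ + (2 * Real.pi * l * t : ℝ) * Complex.I)) +
      ∫ x in Set.Ioi (0:ℝ), (Real.exp (-(σ - 1) * x) : ℂ) * bFT (l * (x - u)) := by
    rw [← pole_int σ l u hσ, ← integral_add i1 i2]
    congr 1
    ext t
    rw [hL _ (by simpa using hσ)]
    ring
  have e2 : ∫ x in Set.Ioi (0:ℝ), (Real.exp (-(σ - 1) * x) : ℂ) * bFT (l * (x - u)) =
      ((∫ x in Set.Ioi (0:ℝ), Real.exp (-(σ - 1) * x) * (bFT (l * (x - u))).re : ℝ) : ℂ) := by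
    rw [← integral_complex_ofReal]
    congr 1
    ext x
    rw [bFT_ofReal (l * (x - u))]
    simp
  have hs' := Complex.hasSum_re hs
  rw [e1, e2, Complex.add_re, Complex.ofReal_re] at hs'
  rw [← hs'.tsum_eq]
  apply tsum_nonpos
  intro n
  rw [Complex.re_ofReal_mul]
  by_cases hn : IsPrimePow n
  · apply mul_nonpos_of_nonneg_of_nonpos
    · exact div_nonneg ArithmeticFunction.vonMangoldt_nonneg (by positivity)
    · apply bFT_nonpos
      rw [abs_mul, abs_of_pos hl]
      have := hno n hn
      rwa [div_lt_iff₀' hl] at this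
  · rw [ArithmeticFunction.vonMangoldt_eq_zero_iff.2 hn]
    simp

lemma bFT_comp_integrable (l u : ℝ) (hl : 0 < l) :
    Integrable fun x : ℝ => (bFT (l * (x - u))).re :=
  ((bFT_integrable.re.comp_mul_left' hl.ne').comp_sub_right u)

lemma limit_ineq (h : ℂ → ℂ) (hc : ContinuousOn h {s | 1 ≤ s.re})
    (hL : ∀ s : ℂ, 1 < s.re →
      LSeries (fun n => ((ArithmeticFunction.vonMangoldt n : ℝ) : ℂ)) s = h s + 1 / (s - 1))
    (l u : ℝ) (hl : 0 < l)
    (hno : ∀ n : ℕ, IsPrimePow n → 1 / l < |Real.log n - u|) :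
    (∫ t : ℝ, bE (-(l * u)) t * bphi t * h ((1:ℝ) + (2 * Real.pi * l * t : ℝ) * Complex.I)).re +
    ∫ x in Set.Ioi (0:ℝ), (bFT (l * (x - u))).re ≤ 0 := by
  have T1 : Tendsto (fun σ : ℝ => ∫ t : ℝ, bE (-(l * u)) t * bphi t *
      h (σ + (2 * Real.pi * l * t : ℝ) * Complex.I)) (𝓝[>] 1)
      (𝓝 (∫ t : ℝ, bE (-(l * u)) t * bphi t *
        h ((1:ℝ) + (2 * Real.pi * l * t : ℝ) * Complex.I))) := by
    let K : Set ℂ := (fun z : ℝ × ℝ => (z.1 : ℂ) + (2 * Real.pi * l * z.2 : ℝ) * Complex.I) ''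
      (Set.Icc 1 2 ×ˢ Set.Icc (-1) 1)
    have hK : IsCompact K := (isCompact_Icc.prod isCompact_Icc).image (by fun_prop)
    have hKs : K ⊆ {s | 1 ≤ s.re} := by
      rintro _ ⟨⟨a, b⟩, ⟨ha, hb⟩, rfl⟩
      simpa using ha.1
    obtain ⟨M, hM⟩ := hK.exists_bound_of_continuousOn (hc.mono hKs)
    have hev : ∀ᶠ σ : ℝ in 𝓝[>] 1, σ ∈ Set.Ioc 1 2 := Ioc_mem_nhdsGT (by norm_num)
    apply tendsto_integral_filter_of_dominated_convergence (fun t => ‖bphi t‖ * M)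
    · filter_upwards [hev] with σ hσ
      apply Continuous.aestronglyMeasurable
      refine ((bE_cont _).mul (Complex.continuous_ofReal.comp bphi_continuous)).mul ?_
      apply hc.comp_continuous (by fun_prop)
      intro t; simpa using hσ.1.le
    · filter_upwards [hev] with σ hσ
      refine .of_forall fun t => ?_
      rw [norm_mul, norm_mul, bE_norm, one_mul, Complex.norm_real]
      by_cases ht : 1 ≤ |t|
      · simp [bphi_eq_zero ht]
      · push Not at ht
        rw [abs_lt] at ht
        gcongr
        exact hM _ ⟨(σ, t), ⟨⟨hσ.1.le, hσ.2⟩, ⟨ht.1.le, ht.2.le⟩⟩, rfl⟩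
    · exact bphi_integrable.norm.mul_const M
    · refine .of_forall fun t => ?_
      apply Tendsto.const_mul
      have hcw := hc ((1:ℝ) + (2 * Real.pi * l * t : ℝ) * Complex.I) (by simp)
      refine hcw.tendsto.comp ?_
      apply tendsto_nhdsWithin_of_tendsto_nhds_of_eventually_within
      · have : Continuous fun σ : ℝ => (σ : ℂ) + (2 * Real.pi * l * t : ℝ) * Complex.I := by
          fun_prop
        exact (this.tendsto 1).mono_left nhdsWithin_le_nhds
      · filter_upwards [hev] with σ hσ
        simpa using hσ.1.le
  have T2 : Tendsto (fun σ : ℝ => ∫ x in Set.Ioi (0:ℝ),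
      Real.exp (-(σ - 1) * x) * (bFT (l * (x - u))).re) (𝓝[>] 1)
      (𝓝 (∫ x in Set.Ioi (0:ℝ), (bFT (l * (x - u))).re)) := by
    have hbc := bFT_continuous
    have hev : ∀ᶠ σ : ℝ in 𝓝[>] 1, σ ∈ Set.Ioi (1:ℝ) := self_mem_nhdsWithin
    apply tendsto_integral_filter_of_dominated_convergence
      (fun x => ‖(bFT (l * (x - u))).re‖)
    · refine .of_forall fun σ => ?_
      apply Continuous.aestronglyMeasurable
      fun_prop
    · filter_upwards [hev] with σ hσ
      refine (ae_restrict_iff' measurableSet_Ioi).2 (.of_forall fun x hx => ?_)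
      rw [norm_mul]
      apply mul_le_of_le_one_left (norm_nonneg _)
      rw [Real.norm_of_nonneg (Real.exp_pos _).le, Real.exp_le_one_iff]
      have : 0 < (σ - 1) * x := mul_pos (sub_pos.2 hσ) hx
      linarith
    · exact (bFT_comp_integrable l u hl).norm.integrableOn
    · refine .of_forall fun x => ?_
      have : Continuous fun σ : ℝ => Real.exp (-(σ - 1) * x) * (bFT (l * (x - u))).re := by fun_prop
      have := (this.tendsto 1).mono_left (nhdsWithin_le_nhds (s := Set.Ioi 1))
      simpa using this
  have T := ((Complex.continuous_re.tendsto _).comp T1).add T2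
  refine le_of_tendsto T ?_
  filter_upwards [self_mem_nhdsWithin] with σ hσ
  exact main_ineq h hc hL l u hl hno σ hσ

lemma int_lower (l u : ℝ) (hl : 0 < l) (hu : 1 / l ≤ u) :
    1 / l ≤ ∫ x in Set.Ioi (0:ℝ), (bFT (l * (x - u))).re := by
  have hi := bFT_comp_integrable l u hl
  have h1 : ∫ x : ℝ, (bFT (l * (x - u))).re = 1 / l := by
    rw [integral_sub_right_eq_self (fun x => (bFT (l * x)).re) u,
      Measure.integral_comp_mul_left (fun x => (bFT x).re) l, bFT_integral]
    simp [abs_of_pos hl]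
  rw [← h1, ← integral_add_compl (measurableSet_Ioi (a := (0:ℝ))) hi]
  have : ∫ x in (Set.Ioi (0:ℝ))ᶜ, (bFT (l * (x - u))).re ≤ 0 := by
    rw [Set.compl_Ioi, integral_Iic_eq_integral_Iio]
    apply setIntegral_nonpos measurableSet_Iio
    intro x hx
    apply bFT_nonpos
    rw [abs_mul, abs_of_pos hl, ← div_lt_iff₀' hl]
    have hx' : x < 0 := hx
    rw [abs_of_neg (by have := one_div_pos.2 hl; linarith)]
    linarith
  linarith

lemma exists_primePow (l : ℝ) (hl : 0 < l) :
    ∃ U : ℝ, ∀ u ≥ U, ∃ n : ℕ, IsPrimePow n ∧ |Real.log n - u| ≤ 1 / l := by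
  obtain ⟨h, hc, hL⟩ := exists_bh
  have RL := Real.tendsto_integral_exp_smul_cocompact
    (fun t : ℝ => (bphi t : ℂ) * h ((1:ℝ) + (2 * Real.pi * l * t : ℝ) * Complex.I))
  have hlim : Tendsto (fun u : ℝ => -(l * u)) atTop (cocompact ℝ) :=
    (tendsto_neg_atTop_atBot.comp (tendsto_id.const_mul_atTop hl)).mono_right atBot_le_cocompact
  have RL' := (Complex.continuous_re.tendsto _).comp (RL.comp hlim)
  have hev := RL'.eventually (lt_mem_nhds (show -(1 / l) < (0:ℂ).re by simpa using hl))
  obtain ⟨U, hU⟩ := eventually_atTop.1 (hev.and (eventually_ge_atTop (1 / l)))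
  refine ⟨U, fun u hu => ?_⟩
  by_contra! hno
  obtain ⟨h1, h2⟩ := hU u hu
  have h3 := limit_ineq h hc hL l u hl hno
  have h4 := int_lower l u hl h2
  have h5 : (∫ v : ℝ, Real.fourierChar (-(v * (-(l * u)))) •
      ((bphi v : ℂ) * h ((1:ℝ) + (2 * Real.pi * l * v : ℝ) * Complex.I))) =
      ∫ t : ℝ, bE (-(l * u)) t * bphi t * h ((1:ℝ) + (2 * Real.pi * l * t : ℝ) * Complex.I) := by
    congr 1
    ext t
    rw [Circle.smul_def, Real.fourierChar_apply, smul_eq_mul, ← mul_assoc, bE]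
    congr 4
    push_cast
    ring
  simp only [Function.comp_apply] at h1
  rw [h5] at h1
  linarith

lemma c_identity (k X : ℝ) (hk : 0 < k) (hX : 0 < X) :
    k ^ 2 * (Real.sqrt (X / (2 * k))) ^ 3 =
      Real.sqrt k / (2 * Real.sqrt 2) * X ^ (3 / 2 : ℝ) := by
  have h1 : X ^ (3 / 2 : ℝ) = Real.sqrt X ^ 3 := by
    rw [Real.sqrt_eq_rpow, ← Real.rpow_natCast, ← Real.rpow_mul hX.le]
    norm_num
  rw [h1, Real.sqrt_div hX.le, Real.sqrt_mul (by norm_num : (0:ℝ) ≤ 2)]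
  have hs2 : Real.sqrt 2 ^ 2 = 2 := Real.sq_sqrt (by norm_num)
  have hsk : Real.sqrt k ^ 2 = k := Real.sq_sqrt hk.le
  have p2 : 0 < Real.sqrt 2 := by positivity
  have pk : 0 < Real.sqrt k := by positivity
  generalize Real.sqrt 2 = a at *
  generalize Real.sqrt k = b at *
  subst hsk
  have : (2:ℝ) = a ^ 2 := hs2.symm
  rw [this]
  field_simp

theorem ex_bip_Bt_lower_odd (t : ℕ) (ht : 1 ≤ t) (hodd : Odd t) (ε : ℝ) (hε : 0 < ε) :
    ∃ N : ℕ, ∀ n : ℕ, N ≤ n → ∃ G : SimpleGraph (Fin n),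
      G.Colorable 2 ∧ ¬ ContainsCopy (Bgraph t) G ∧
      (Real.sqrt (((t + 1) / 2 : ℕ) : ℝ) / (2 * Real.sqrt 2) - ε) * (n : ℝ) ^ (3/2 : ℝ)
        ≤ (G.edgeSet.ncard : ℝ) := by
  obtain ⟨k, hk⟩ : ∃ k, t + 1 = 2 * k := by
    obtain ⟨m, hm⟩ := hodd
    exact ⟨m + 1, by omega⟩
  have hk' : (t + 1) / 2 = k := by omega
  have hk0 : 0 < k := by omega
  have hkR : (0:ℝ) < k := by exact_mod_cast hk0
  rw [hk']
  set c := Real.sqrt (k : ℝ) / (2 * Real.sqrt 2) with hc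
  have hc0 : 0 < c := by positivity
  set a := ε / (6 * c) with ha
  have ha0 : 0 < a := by positivity
  obtain ⟨U, hU⟩ := exists_primePow (1 / a) (by positivity)
  have hlim : Tendsto (fun n : ℕ => Real.log (Real.sqrt ((n : ℝ) / (2 * k)))) atTop atTop := by
    refine Real.tendsto_log_atTop.comp (Real.tendsto_sqrt_atTop.comp ?_)
    exact tendsto_natCast_atTop_atTop.atTop_div_const (by positivity)
  obtain ⟨N, hN⟩ := eventually_atTop.1
    ((hlim.eventually_ge_atTop (U + a)).and (eventually_ge_atTop 1))
  refine ⟨N, fun n hn => ?_⟩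
  obtain ⟨h1, hn1⟩ := hN n hn
  have hnR : (0:ℝ) < n := by exact_mod_cast hn1
  set S := Real.sqrt ((n : ℝ) / (2 * k)) with hS
  have hS0 : 0 < S := by positivity
  obtain ⟨q, hq, hq2⟩ := hU (Real.log S - a) (by linarith)
  rw [one_div_one_div, abs_le] at hq2
  have hq0 : (0:ℝ) < q := by exact_mod_cast hq.pos
  have hle : (q : ℝ) ≤ S := (Real.log_le_log_iff hq0 hS0).1 (by linarith)
  have hge : Real.exp (-(2 * a)) * S ≤ q := by
    rw [← Real.log_le_log_iff (by positivity) hq0, Real.log_mul (Real.exp_pos _).ne' hS0.ne',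
      Real.log_exp]
    linarith
  have hcard : 2 * k * q ^ 2 ≤ n := by
    have h2 : (q : ℝ) ^ 2 ≤ n / (2 * k) := by
      rw [← Real.sq_sqrt (show (0:ℝ) ≤ n / (2 * k) by positivity)]
      exact pow_le_pow_left₀ hq0.le hle 2
    rw [le_div_iff₀ (by positivity)] at h2
    have h3 : (2 * k * q ^ 2 : ℝ) ≤ n := by linarith
    exact_mod_cast h3
  obtain ⟨G, hG1, hG2, hG3⟩ := comb t k q n hk hq hcard
  refine ⟨G, hG1, hG2, ?_⟩
  have hG3' : (k : ℝ) ^ 2 * (q : ℝ) ^ 3 ≤ G.edgeSet.ncard := by exact_mod_cast hG3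
  refine le_trans ?_ hG3'
  have h4 : (Real.exp (-(2 * a)) * S) ^ 3 ≤ (q : ℝ) ^ 3 :=
    pow_le_pow_left₀ (by positivity) hge 3
  have h5 : (k : ℝ) ^ 2 * (Real.exp (-(2 * a)) * S) ^ 3 =
      Real.exp (-(6 * a)) * (c * (n : ℝ) ^ (3 / 2 : ℝ)) := by
    rw [hc, ← c_identity k n hkR hnR, mul_pow, ← Real.exp_nat_mul]
    rw [show ((3:ℕ):ℝ) * (-(2 * a)) = -(6 * a) by push_cast; ring]
    ring
  have h6 : 1 - 6 * a ≤ Real.exp (-(6 * a)) := by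
    have := Real.add_one_le_exp (-(6 * a)); linarith
  have h7 : c - ε = (1 - 6 * a) * c := by
    rw [ha]; field_simp
  calc (c - ε) * (n : ℝ) ^ (3 / 2 : ℝ) = (1 - 6 * a) * (c * (n : ℝ) ^ (3 / 2 : ℝ)) := by
        rw [h7]; ring
    _ ≤ Real.exp (-(6 * a)) * (c * (n : ℝ) ^ (3 / 2 : ℝ)) := by gcongr
    _ = (k : ℝ) ^ 2 * (Real.exp (-(2 * a)) * S) ^ 3 := h5.symm
    _ ≤ (k : ℝ) ^ 2 * (q : ℝ) ^ 3 := by gcongr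
end
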